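/- Let J : ℝ → [0,∞) be a strictly convex function, and let g : ℝ → [0,∞) be a measurable 2π-periodic function with g ∈ L¹(−π,π), g = g^{*per}, and g strictly decreasing on (0,π). Let u, v : (−π,π) → [0,∞) be nonnegative measurable functions with ∫_{−π}^{π}∫_{−π}^{π} J(u(x) − v(y)) g(x−y) dx dy finite. Then equality ∫∫ J(u^{*}(x) − v^{*}(y)) g(x−y) dx dy = ∫∫ J(u(x) − v(y)) g(x−y) dx dy holds if and only if one of the following holds: (i) u is constant almost everywhere in (−π,π) or v is constant almost everywhere in (−π,π); (ii) extending u and v to ℝ in a 2π-periodic way, there exists z ∈ ℝ such that u(x) = u^{*per}(x+z) and v(y) = v^{*per}(y+z) for almost every x, y ∈ ℝ. -/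

import Mathlib

open MeasureTheory Real

/-- For a measurable set `A ⊂ ℝ` of finite measure, `A^* := (−|A|/2, |A|/2)`. -/
noncomputable def symmSet (A : Set ℝ) : Set ℝ :=
  Set.Ioo (-((volume A).toReal / 2)) ((volume A).toReal / 2)

/-- Symmetric decreasing rearrangement of a (nonnegative) function on `(−π,π)`:
`u^*(x) := ∫₀^∞ χ_{{u>t}^*}(x) dt`. -/
noncomputable def symmRearr (u : ℝ → ℝ) : ℝ → ℝ := fun x =>
  ∫ t in Set.Ioi (0 : ℝ),
    (symmSet {y | y ∈ Set.Ioo (-π) π ∧ t < u y}).indicator (fun _ => (1 : ℝ)) x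

/-- The `2π`-periodic extension of (the restriction to `[−π,π)` of) a function. -/
noncomputable def periodize (f : ℝ → ℝ) : ℝ → ℝ := fun x =>
  f (x - 2 * π * (⌊(x + π) / (2 * π)⌋ : ℝ))

/-- The periodic rearrangement `f^{*per}`: the `2π`-periodic extension of `(f·χ_{(−π,π)})^*`. -/
noncomputable def perRearr (f : ℝ → ℝ) : ℝ → ℝ := periodize (symmRearr f)

namespace CircRearr

open Filter Topology

instance factTwoPi : Fact (0 < 2 * π) := ⟨Real.two_pi_pos⟩

/-- The circle of length `2π`. -/
abbrev Circ := AddCircle (2 * π)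

noncomputable def cs : Circ → ℝ := Real.cos_periodic.lift
noncomputable def sn : Circ → ℝ := Real.sin_periodic.lift

@[simp] lemma cs_coe (x : ℝ) : cs (x : Circ) = Real.cos x := Function.Periodic.lift_coe _ _
@[simp] lemma sn_coe (x : ℝ) : sn (x : Circ) = Real.sin x := Function.Periodic.lift_coe _ _

lemma continuous_cs : Continuous cs := by
  apply continuous_coinduced_dom.mpr
  exact Real.continuous_cos
lemma continuous_sn : Continuous sn := by
  apply continuous_coinduced_dom.mpr
  exact Real.continuous_sin

lemma exists_coe (x : Circ) : ∃ r : ℝ, (r : Circ) = x := QuotientAddGroup.mk_surjective x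

lemma abs_sn_le (x : Circ) : |sn x| ≤ 1 := by
  obtain ⟨x, rfl⟩ := exists_coe x; simpa using Real.abs_sin_le_one x
lemma abs_cs_le (x : Circ) : |cs x| ≤ 1 := by
  obtain ⟨x, rfl⟩ := exists_coe x; simpa using Real.abs_cos_le_one x

/-- reflection -/
noncomputable def rf (c x : Circ) : Circ := c + c - x

@[simp] lemma rf_rf (c x : Circ) : rf c (rf c x) = x := by simp [rf]

lemma cs_neg (x : Circ) : cs (-x) = cs x := by
  obtain ⟨x, rfl⟩ := exists_coe x
  rw [← QuotientAddGroup.mk_neg]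
  exact (cs_coe _).trans ((Real.cos_neg x).trans (cs_coe x).symm)

lemma cs_sub_cs (c x y : Circ) : cs (x - y) - cs (x - rf c y) = 2 * sn (x - c) * sn (y - c) := by
  obtain ⟨x, rfl⟩ := exists_coe x
  obtain ⟨y, rfl⟩ := exists_coe y
  obtain ⟨c, rfl⟩ := exists_coe c
  have h : ((x : Circ) - rf (c : Circ) (y : Circ)) = ((x - (c + c - y) : ℝ) : Circ) := rfl
  have h1 : ((x : Circ) - y) = ((x - y : ℝ) : Circ) := rfl
  have h2 : ((x : Circ) - c) = ((x - c : ℝ) : Circ) := rfl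
  have h3 : ((y : Circ) - c) = ((y - c : ℝ) : Circ) := rfl
  rw [h, h1, h2, h3]
  simp only [cs_coe, sn_coe]
  have e1 : x - y = (x - c) - (y - c) := by ring
  have e2 : x - (c + c - y) = (x - c) + (y - c) := by ring
  rw [e1, e2, Real.cos_sub, Real.cos_add]; ring

lemma sn_rf (c x : Circ) : sn (rf c x - c) = - sn (x - c) := by
  obtain ⟨x, rfl⟩ := exists_coe x
  obtain ⟨c, rfl⟩ := exists_coe c
  have h : (rf (c : Circ) (x : Circ) - c) = ((-(x - c) : ℝ) : Circ) := by
    rw [show -(x - c) = c + c - x - c by ring]; rfl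
  have h2 : ((x : Circ) - c) = ((x - c : ℝ) : Circ) := rfl
  rw [h, h2, sn_coe, sn_coe, Real.sin_neg]

lemma rf_eq_of_sn (c x : Circ) (h : sn (x - c) = 0) : rf c x = x := by
  obtain ⟨x, rfl⟩ := exists_coe x
  obtain ⟨c, rfl⟩ := exists_coe c
  have h2 : ((x : Circ) - c) = ((x - c : ℝ) : Circ) := rfl
  rw [h2, sn_coe, Real.sin_eq_zero_iff] at h
  obtain ⟨n, hn⟩ := h
  have h : (rf (c : Circ) (x : Circ)) = ((c + c - x : ℝ) : Circ) := rfl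
  rw [h, ← sub_eq_zero, ← AddCircle.coe_sub, AddCircle.coe_eq_zero_iff]
  refine ⟨-n, ?_⟩
  simp only [zsmul_eq_mul]; push_cast; linarith

lemma cs_eq_cos_norm (x : Circ) : cs x = Real.cos ‖x‖ := by
  obtain ⟨x, rfl⟩ := exists_coe x
  rw [AddCircle.norm_eq, Real.cos_abs, cs_coe, Real.cos_sub_int_mul_two_pi]

lemma norm_le_pi (x : Circ) : ‖x‖ ≤ π := by
  have := AddCircle.norm_le_half_period (2 * π) (x := x) two_pi_pos.ne'
  rwa [abs_of_pos two_pi_pos, mul_div_cancel_left₀ _ two_ne_zero] at this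

lemma cs_lt_iff {x y : Circ} : cs x < cs y ↔ ‖y‖ < ‖x‖ := by
  rw [cs_eq_cos_norm, cs_eq_cos_norm]
  exact Real.strictAntiOn_cos.lt_iff_gt ⟨norm_nonneg _, norm_le_pi _⟩ ⟨norm_nonneg _, norm_le_pi _⟩

lemma cs_le_iff {x y : Circ} : cs x ≤ cs y ↔ ‖y‖ ≤ ‖x‖ := by
  rw [← not_lt, cs_lt_iff, not_lt]

lemma exists_half (b : Circ) : ∃ c : Circ, c + c = b := by
  obtain ⟨b, rfl⟩ := exists_coe b
  refine ⟨((b / 2 : ℝ) : Circ), ?_⟩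
  rw [← AddCircle.coe_add]; simp

lemma rf_mp (c : Circ) : MeasurePreserving (rf c) (volume : Measure Circ) volume :=
  Measure.measurePreserving_sub_left _ _

lemma measurable_rf (c : Circ) : Measurable (rf c) := (rf_mp c).measurable

lemma continuous_rf (c : Circ) : Continuous (rf c) := by unfold rf; fun_prop

instance : NullSingletonClass (volume : Measure Circ) := by
  refine ⟨fun x => ?_⟩
  have := AddCircle.volume_closedBall (2 * π) (x := x) 0
  simpa [two_pi_pos.le] using this

lemma exists_rep (x : Circ) : ∃ r : ℝ, |r| ≤ π ∧ (r : Circ) = x ∧ ‖x‖ = |r| := by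
  obtain ⟨y, rfl⟩ := exists_coe x
  refine ⟨y - round ((2 * π)⁻¹ * y) * (2 * π), ?_, ?_, AddCircle.norm_eq _⟩
  · rw [← AddCircle.norm_eq]; exact norm_le_pi _
  · rw [AddCircle.coe_sub, sub_eq_self, AddCircle.coe_eq_zero_iff]
    exact ⟨round ((2 * π)⁻¹ * y), by simp⟩

lemma eq_or_of_norm_eq {x y : Circ} (h : ‖x‖ = ‖y‖) : x = y ∨ x = -y := by
  obtain ⟨r, -, rfl, hr⟩ := exists_rep x
  obtain ⟨s, -, rfl, hs⟩ := exists_rep y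
  rw [hr, hs, abs_eq_abs] at h
  rcases h with h | h
  · left; rw [h]
  · right; rw [h]; rfl

lemma ae_ne (a : Circ) : ∀ᵐ x : Circ, x ≠ a := by
  simp [ae_iff]

lemma sn_eq_zero {x : Circ} (h : sn x = 0) : x = 0 ∨ x = (π : ℝ) := by
  obtain ⟨r, hr, rfl, -⟩ := exists_rep x
  rw [sn_coe, Real.sin_eq_zero_iff] at h
  obtain ⟨n, rfl⟩ := h
  rw [abs_mul, abs_of_pos pi_pos] at hr
  have : |(n : ℝ)| ≤ 1 := by
    by_contra hc; push Not at hc; nlinarith [pi_pos]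
  have h1 : |n| ≤ 1 := by exact_mod_cast this
  rcases abs_le.mp h1 with ⟨h2, h3⟩
  have : n = -1 ∨ n = 0 ∨ n = 1 := by omega
  rcases this with rfl | rfl | rfl
  · right
    rw [← sub_eq_zero, ← AddCircle.coe_sub, AddCircle.coe_eq_zero_iff]
    exact ⟨-1, by simp; ring⟩
  · left; simp
  · right; simp

lemma ae_sn_ne (c : Circ) : ∀ᵐ x : Circ, sn (x - c) ≠ 0 := by
  filter_upwards [ae_ne c, ae_ne ((π : ℝ) + c)] with x h1 h2 h
  rcases sn_eq_zero h with h | h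
  · exact h1 (sub_eq_zero.mp h)
  · exact h2 (eq_add_of_sub_eq h)

lemma ae_norm_ne (r : ℝ) : ∀ᵐ x : Circ, ‖x‖ ≠ r := by
  by_cases h : ∃ y : Circ, ‖y‖ = r
  · obtain ⟨y, hy⟩ := h
    filter_upwards [ae_ne y, ae_ne (-y)] with x h1 h2 h
    rcases eq_or_of_norm_eq (h.trans hy.symm) with h | h
    · exact h1 h
    · exact h2 h
  · exact .of_forall fun x hx => h ⟨x, hx⟩

lemma volume_norm_lt (r : ℝ) : volume {x : Circ | ‖x‖ < r} = ENNReal.ofReal (min (2 * π) (2 * r)) := by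
  rw [← AddCircle.volume_closedBall (2 * π) (x := 0) r]
  apply measure_congr
  filter_upwards [ae_norm_ne r] with x hx
  have : ‖x‖ < r ↔ ‖x‖ ≤ r := by rw [lt_iff_le_and_ne]; simp [hx]
  simp only [eq_iff_iff]
  change ‖x‖ < r ↔ x ∈ Metric.closedBall 0 r
  simpa using this

end CircRearr

namespace CircRearr
open Filter Topology

/-- distribution function -/
noncomputable def dist' (f : Circ → ℝ) (t : ℝ) : ℝ := (volume {y : Circ | t < f y}).toReal

/-- rearrangement on the circle -/
noncomputable def R (f : Circ → ℝ) (x : Circ) : ℝ :=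
  (volume {t : ℝ | 0 < t ∧ 2 * ‖x‖ < dist' f t}).toReal

lemma dist'_anti (f : Circ → ℝ) : Antitone (dist' f) := by
  intro s t hst
  exact ENNReal.toReal_mono (measure_ne_top _ _) (measure_mono fun y hy => lt_of_le_of_lt hst hy)

lemma dist'_nonneg (f : Circ → ℝ) (t : ℝ) : 0 ≤ dist' f t := ENNReal.toReal_nonneg

lemma dist'_le (f : Circ → ℝ) (t : ℝ) : dist' f t ≤ 2 * π := by
  have h : volume {y : Circ | t < f y} ≤ ENNReal.ofReal (2 * π) := by
    rw [← AddCircle.measure_univ]; exact measure_mono (Set.subset_univ _)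
  exact ENNReal.toReal_le_of_le_ofReal two_pi_pos.le h

lemma dist'_tendsto_zero {f : Circ → ℝ} (hf : Measurable f) {r : ℝ} (hr : 0 < r) :
    ∃ M, dist' f M < r := by
  have h : Tendsto (fun n : ℕ => volume {y : Circ | (n : ℝ) < f y}) atTop
      (𝓝 (volume (⋂ n : ℕ, {y : Circ | (n : ℝ) < f y}))) := by
    apply tendsto_measure_iInter_atTop
    · intro n; exact (measurableSet_lt measurable_const hf).nullMeasurableSet
    · intro m n hmn y hy
      change (n : ℝ) < f y at hy
      change (m : ℝ) < f y
      exact lt_of_le_of_lt (by exact_mod_cast hmn) hy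
    · exact ⟨0, measure_ne_top _ _⟩
  have he : (⋂ n : ℕ, {y : Circ | (n : ℝ) < f y}) = ∅ := by
    ext y
    simp only [Set.mem_iInter, Set.mem_ofPred_eq, Set.mem_empty_iff_false, iff_false, not_forall,
      not_lt]
    exact exists_nat_ge (f y)
  rw [he, measure_empty] at h
  have h2 := (ENNReal.tendsto_toReal ENNReal.zero_ne_top).comp h
  simp only [ENNReal.toReal_zero] at h2
  obtain ⟨n, hn⟩ := ((tendsto_order.mp h2).2 r hr).exists
  exact ⟨n, hn⟩

lemma dist'_right {f : Circ → ℝ} {t r : ℝ} (h : r < dist' f t) :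
    ∃ s, t < s ∧ r < dist' f s := by
  have hT : Tendsto (fun n : ℕ => volume {y : Circ | t + 1 / ((n : ℝ) + 1) < f y}) atTop
      (𝓝 (volume (⋃ n : ℕ, {y : Circ | t + 1 / ((n : ℝ) + 1) < f y}))) := by
    apply tendsto_measure_iUnion_atTop
    intro m n hmn y hy
    change t + 1 / ((m : ℝ) + 1) < f y at hy
    change t + 1 / ((n : ℝ) + 1) < f y
    refine lt_of_le_of_lt ?_ hy
    have : (m : ℝ) ≤ n := by exact_mod_cast hmn
    gcongr
  have he : (⋃ n : ℕ, {y : Circ | t + 1 / ((n : ℝ) + 1) < f y}) = {y | t < f y} := by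
    ext y
    simp only [Set.mem_iUnion, Set.mem_ofPred_eq]
    constructor
    · rintro ⟨n, hn⟩
      have : (0 : ℝ) < 1 / ((n : ℝ) + 1) := by positivity
      linarith
    · intro hy
      obtain ⟨n, hn⟩ := exists_nat_one_div_lt (sub_pos.mpr hy)
      exact ⟨n, by linarith⟩
  rw [he] at hT
  have h2 := (ENNReal.tendsto_toReal (measure_ne_top volume {y : Circ | t < f y})).comp hT
  obtain ⟨n, hn⟩ := ((tendsto_order.mp h2).1 r h).exists
  exact ⟨t + 1 / ((n : ℝ) + 1), by linarith [show (0 : ℝ) < 1 / ((n : ℝ) + 1) by positivity], hn⟩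

lemma R_nonneg (f : Circ → ℝ) (x : Circ) : 0 ≤ R f x := ENNReal.toReal_nonneg

lemma lt_R_iff {f : Circ → ℝ} (hf : Measurable f) {x : Circ} (hx : x ≠ 0) {t : ℝ} (ht : 0 ≤ t) :
    t < R f x ↔ 2 * ‖x‖ < dist' f t := by
  have hx' : 0 < 2 * ‖x‖ := by have := norm_pos_iff.mpr hx; linarith
  constructor
  · intro h
    by_contra hc
    have hsub : {s : ℝ | 0 < s ∧ 2 * ‖x‖ < dist' f s} ⊆ Set.Ioc 0 t := by
      rintro s ⟨hs, hs2⟩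
      refine ⟨hs, ?_⟩
      by_contra hts
      exact hc (lt_of_lt_of_le hs2 (dist'_anti f (not_le.mp hts).le))
    have h3 : volume {s : ℝ | 0 < s ∧ 2 * ‖x‖ < dist' f s} ≤ ENNReal.ofReal t := by
      refine (measure_mono hsub).trans ?_
      simp
    exact absurd h (not_lt.mpr (ENNReal.toReal_le_of_le_ofReal ht h3))
  · intro h
    obtain ⟨M, hM⟩ := dist'_tendsto_zero hf hx'
    obtain ⟨s, hs, hs2⟩ := dist'_right h
    have hfin : volume {s : ℝ | 0 < s ∧ 2 * ‖x‖ < dist' f s} ≠ ⊤ := by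
      refine ne_top_of_le_ne_top (b := volume (Set.Ioc 0 M)) (by simp) (measure_mono ?_)
      rintro s ⟨hs, hs2⟩
      refine ⟨hs, ?_⟩
      by_contra hts
      have := dist'_anti f (not_le.mp hts).le
      linarith
    have hle : ENNReal.ofReal s ≤ volume {s : ℝ | 0 < s ∧ 2 * ‖x‖ < dist' f s} := by
      rw [show ENNReal.ofReal s = volume (Set.Ioc 0 s) by simp]
      refine measure_mono ?_
      rintro r ⟨hr, hr2⟩
      exact ⟨hr, lt_of_lt_of_le hs2 (dist'_anti f hr2)⟩
    exact lt_of_lt_of_le hs ((ENNReal.ofReal_le_iff_le_toReal hfin).mp hle)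

lemma measurable_R {f : Circ → ℝ} (hf : Measurable f) : Measurable (R f) := by
  refine measurable_of_Ioi fun t => ?_
  rcases lt_or_ge t 0 with ht | ht
  · convert MeasurableSet.univ
    ext x; simp only [Set.mem_preimage, Set.mem_Ioi, Set.mem_univ, iff_true]
    exact lt_of_lt_of_le ht (R_nonneg f x)
  · have : R f ⁻¹' Set.Ioi t = ({x | 2 * ‖x‖ < dist' f t} ∩ {0}ᶜ) ∪ (R f ⁻¹' Set.Ioi t ∩ {0}) := by
      ext x
      by_cases hx : x = 0
      · simp [hx]
      · simp [hx, lt_R_iff hf hx ht]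
    rw [this]
    refine MeasurableSet.union (MeasurableSet.inter ?_ (measurableSet_singleton 0).compl) ?_
    · exact measurableSet_lt (by fun_prop) measurable_const
    · exact (Set.Finite.subset (Set.finite_singleton 0) Set.inter_subset_right).measurableSet

/-- equimeasurability -/
def EqD (f h : Circ → ℝ) : Prop := ∀ t : ℝ, volume {x : Circ | t < f x} = volume {x : Circ | t < h x}

lemma EqD.symm {f h : Circ → ℝ} (H : EqD f h) : EqD h f := fun t => (H t).symm
lemma EqD.trans {f h k : Circ → ℝ} (H : EqD f h) (H' : EqD h k) : EqD f k :=
  fun t => (H t).trans (H' t)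

lemma R_congr {f h : Circ → ℝ} (H : EqD f h) : R f = R h := by
  funext x; unfold R dist'
  simp only [H _]

lemma volume_two_norm_lt (f : Circ → ℝ) (t : ℝ) :
    volume {x : Circ | 2 * ‖x‖ < dist' f t} = volume {x : Circ | t < f x} := by
  have : {x : Circ | 2 * ‖x‖ < dist' f t} = {x : Circ | ‖x‖ < dist' f t / 2} := by
    ext x; simp only [Set.mem_ofPred_eq]; constructor <;> intro h <;> linarith
  rw [this, volume_norm_lt, mul_div_cancel₀ _ two_ne_zero, min_eq_right (dist'_le f t), dist',
    ENNReal.ofReal_toReal (measure_ne_top _ _)]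

lemma eqD_R {f : Circ → ℝ} (hf : Measurable f) (hf0 : ∀ x, 0 ≤ f x) : EqD (R f) f := by
  intro t
  rcases lt_or_ge t 0 with ht | ht
  · congr 1; ext x
    simp [lt_of_lt_of_le ht (R_nonneg f x), lt_of_lt_of_le ht (hf0 x)]
  · rw [← volume_two_norm_lt f]
    apply measure_congr
    filter_upwards [ae_ne 0] with x hx
    exact propext (lt_R_iff (f := f) hf hx ht)

lemma R_mono {f h : Circ → ℝ} (hf : Measurable f) (hh : Measurable h) (hfh : ∀ x, f x ≤ h x)
    {x : Circ} (hx : x ≠ 0) : R f x ≤ R h x := by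
  by_contra hc
  have h1 := (lt_R_iff hf hx (R_nonneg h x)).mp (not_le.mp hc)
  have h2 : dist' f (R h x) ≤ dist' h (R h x) :=
    ENNReal.toReal_mono (measure_ne_top _ _) (measure_mono fun y hy => lt_of_lt_of_le hy (hfh y))
  exact lt_irrefl _ ((lt_R_iff hh hx (R_nonneg h x)).mpr (lt_of_lt_of_le h1 h2))

lemma R_le {f : Circ → ℝ} (hf : Measurable f) {M : ℝ} (hM : 0 ≤ M) (hfM : ∀ x, f x ≤ M)
    {x : Circ} (hx : x ≠ 0) : R f x ≤ M := by
  by_contra hc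
  have h1 := (lt_R_iff hf hx hM).mp (not_le.mp hc)
  have : dist' f M = 0 := by
    have : {y : Circ | M < f y} = ∅ := by ext y; simpa using hfM y
    simp [dist', this]
  have := norm_nonneg x
  linarith

lemma R_anti {f : Circ → ℝ} (hf : Measurable f) {x y : Circ} (hx : x ≠ 0) (h : ‖x‖ ≤ ‖y‖) :
    R f y ≤ R f x := by
  have hy : y ≠ 0 := by
    rintro rfl; simp at h; exact hx h
  by_contra hc
  have h1 := (lt_R_iff hf hy (R_nonneg f x)).mp (not_le.mp hc)
  exact lt_irrefl _ ((lt_R_iff hf hx (R_nonneg f x)).mpr (by linarith))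

lemma eq_R_of_mono {f : Circ → ℝ} (hf : Measurable f) (hf0 : ∀ x, 0 ≤ f x)
    (hm : ∀ᵐ p : Circ × Circ ∂(volume.prod volume), 0 ≤ (f p.1 - f p.2) * (cs p.1 - cs p.2)) :
    f =ᵐ[volume] R f := by
  have key : ∀ t : ℝ, 0 ≤ t → ∀ᵐ x : Circ, (t < f x ↔ t < R f x) := by
    intro t ht
    set A : Set Circ := {x | t < f x} with hA
    set B : Set Circ := {x | 2 * ‖x‖ < dist' f t} with hB
    have hAm : MeasurableSet A := measurableSet_lt measurable_const hf
    have hBm : MeasurableSet B := measurableSet_lt (by fun_prop) measurable_const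
    have hAB : volume A = volume B := (volume_two_norm_lt f t).symm
    have hd : volume (A \ B) = volume (B \ A) := by
      have h1 := measure_sdiff_add_inter A hBm (μ := (volume : Measure Circ))
      have h2 := measure_sdiff_add_inter B hAm (μ := (volume : Measure Circ))
      rw [Set.inter_comm B A, ← hAB, ← h1] at h2
      exact ((ENNReal.add_left_inj (measure_ne_top _ _)).mp h2).symm
    have h0 : volume (A \ B) = 0 := by
      by_contra hne
      have hpos : (volume.prod volume) ((A \ B) ×ˢ (B \ A)) ≠ (0 : ENNReal) := by
        rw [Measure.prod_prod, ← hd]; exact mul_ne_zero hne hne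
      have hnull : (volume.prod volume) ((A \ B) ×ˢ (B \ A)) = (0 : ENNReal) := by
        refine measure_mono_null ?_ (ae_iff.mp hm)
        rintro ⟨x, y⟩ ⟨⟨hxA, hxB⟩, hyB, hyA⟩
        simp only [hA, hB, Set.mem_ofPred_eq, not_lt] at hxA hxB hyB hyA
        simp only [Set.mem_ofPred_eq, not_le]
        have hc : cs x < cs y := cs_lt_iff.mpr (by linarith)
        exact mul_neg_of_pos_of_neg (by linarith) (by linarith)
      exact hpos hnull
    have h1 : ∀ᵐ x : Circ, x ∉ A \ B := measure_eq_zero_iff_ae_notMem.mp h0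
    have h2 : ∀ᵐ x : Circ, x ∉ B \ A := measure_eq_zero_iff_ae_notMem.mp (hd ▸ h0)
    filter_upwards [h1, h2, ae_ne 0] with x h1 h2 hx
    rw [lt_R_iff hf hx ht]
    constructor
    · intro h; by_contra hc; exact h1 ⟨h, hc⟩
    · intro h; by_contra hc; exact h2 ⟨h, hc⟩
  have key2 : ∀ᵐ x : Circ, ∀ q : ℚ, 0 ≤ (q : ℝ) → ((q : ℝ) < f x ↔ (q : ℝ) < R f x) := by
    rw [ae_all_iff]; intro q
    by_cases hq : 0 ≤ (q : ℝ)
    · filter_upwards [key q hq] with x hx _ using hx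
    · exact .of_forall fun x h => absurd h hq
  filter_upwards [key2] with x hx
  rcases lt_trichotomy (f x) (R f x) with h | h | h
  · obtain ⟨q, h1, h2⟩ := exists_rat_btwn h
    have := (hx q ((hf0 x).trans h1.le)).mpr h2
    linarith
  · exact h
  · obtain ⟨q, h1, h2⟩ := exists_rat_btwn h
    have := (hx q ((R_nonneg f x).trans h1.le)).mp h2
    linarith

lemma EqD.map_eq {f h : Circ → ℝ} (hf : Measurable f) (hh : Measurable h) (H : EqD f h) :
    Measure.map f volume = Measure.map h volume := by
  have : IsFiniteMeasure (Measure.map f (volume : Measure Circ)) :=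
    Measure.isFiniteMeasure_map _ _
  refine Measure.ext_of_Iic _ _ fun t => ?_
  rw [Measure.map_apply hf measurableSet_Iic, Measure.map_apply hh measurableSet_Iic]
  have e : ∀ k : Circ → ℝ, k ⁻¹' Set.Iic t = {x | t < k x}ᶜ := by intro k; ext x; simp
  rw [e, e, measure_compl (measurableSet_lt measurable_const hf) (measure_ne_top _ _),
    measure_compl (measurableSet_lt measurable_const hh) (measure_ne_top _ _), H t]

lemma EqD.lintegral_eq {f h : Circ → ℝ} (hf : Measurable f) (hh : Measurable h) (H : EqD f h)
    {ψ : ℝ → ENNReal} (hψ : Measurable ψ) : ∫⁻ x, ψ (f x) = ∫⁻ x, ψ (h x) := by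
  rw [← lintegral_map hψ hf, ← lintegral_map hψ hh, H.map_eq hf hh]

lemma EqD.integral_eq {f h : Circ → ℝ} (hf : Measurable f) (hh : Measurable h) (H : EqD f h) :
    ∫ x, f x = ∫ x, h x := by
  have := H.map_eq hf hh
  have h1 := integral_map (μ := (volume : Measure Circ)) hf.aemeasurable
    (f := fun y : ℝ => y) (by fun_prop)
  have h2 := integral_map (μ := (volume : Measure Circ)) hh.aemeasurable
    (f := fun y : ℝ => y) (by fun_prop)
  rw [← h1, ← h2, this]

lemma integrable_of_bdd {f : Circ → ℝ} (hf : Measurable f) {M : ℝ} (hM : ∀ᵐ x, |f x| ≤ M) :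
    Integrable f := Integrable.of_bound hf.aestronglyMeasurable M (by simpa using hM)

lemma integrable_R {f : Circ → ℝ} (hf : Measurable f) {M : ℝ} (hM0 : 0 ≤ M) (hM : ∀ x, f x ≤ M) :
    Integrable (R f) := by
  refine integrable_of_bdd (measurable_R hf) (M := M) ?_
  filter_upwards [ae_ne 0] with x hx
  rw [abs_of_nonneg (R_nonneg f x)]; exact R_le hf hM0 hM hx

lemma R_contr {f h : Circ → ℝ} (hf : Measurable f) (hh : Measurable h) (hf0 : ∀ x, 0 ≤ f x)
    (hh0 : ∀ x, 0 ≤ h x) {M : ℝ} (hfM : ∀ x, f x ≤ M) (hhM : ∀ x, h x ≤ M) :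
    ∫ x, |R f x - R h x| ≤ ∫ x, |f x - h x| := by
  have hM0 : 0 ≤ M := (hf0 0).trans (hfM 0)
  let k : Circ → ℝ := fun x => max (f x) (h x)
  have hk : Measurable k := hf.max hh
  have hk0 : ∀ x, 0 ≤ k x := fun x => (hf0 x).trans (le_max_left _ _)
  have hkM : ∀ x, k x ≤ M := fun x => max_le (hfM x) (hhM x)
  have If := integrable_of_bdd hf (M := M) (.of_forall fun x => by
    rw [abs_of_nonneg (hf0 x)]; exact hfM x)
  have Ih := integrable_of_bdd hh (M := M) (.of_forall fun x => by
    rw [abs_of_nonneg (hh0 x)]; exact hhM x)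
  have Ik := integrable_of_bdd hk (M := M) (.of_forall fun x => by
    rw [abs_of_nonneg (hk0 x)]; exact hkM x)
  have IRf := integrable_R hf hM0 hfM
  have IRh := integrable_R hh hM0 hhM
  have IRk := integrable_R hk hM0 hkM
  calc ∫ x, |R f x - R h x| ≤ ∫ x, ((R k x - R f x) + (R k x - R h x)) := by
        refine integral_mono_ae (IRf.sub IRh).abs ((IRk.sub IRf).add (IRk.sub IRh)) ?_
        filter_upwards [ae_ne 0] with x hx
        have h1 : R f x ≤ R k x := R_mono hf hk (fun x => le_max_left _ _) hx
        have h2 : R h x ≤ R k x := R_mono hh hk (fun x => le_max_right _ _) hx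
        simp only [abs_le]; constructor <;> linarith
    _ = ((∫ x, k x) - ∫ x, f x) + ((∫ x, k x) - ∫ x, h x) := by
        rw [show (∫ x, ((R k x - R f x) + (R k x - R h x))) = _ from integral_add (IRk.sub IRf) (IRk.sub IRh), integral_sub IRk IRf,
          integral_sub IRk IRh,
          (eqD_R hf hf0).integral_eq (measurable_R hf) hf,
          (eqD_R hh hh0).integral_eq (measurable_R hh) hh,
          (eqD_R hk hk0).integral_eq (measurable_R hk) hk]
    _ = ∫ x, ((k x - f x) + (k x - h x)) := by
        rw [show (∫ x, ((k x - f x) + (k x - h x))) = _ from integral_add (Ik.sub If) (Ik.sub Ih),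
          integral_sub Ik If,
          integral_sub Ik Ih]
    _ = ∫ x, |f x - h x| := by
        congr 1; funext x
        simp only [k]
        rcases le_total (f x) (h x) with h | h
        · rw [max_eq_right h, abs_of_nonpos (by linarith)]; ring
        · rw [max_eq_left h, abs_of_nonneg (by linarith)]; ring

end CircRearr

namespace CircRearr
open Filter Topology

/-- polarization -/
noncomputable def pol (c : Circ) (f : Circ → ℝ) (x : Circ) : ℝ :=
  if 0 < sn (x - c) then max (f x) (f (rf c x)) else min (f x) (f (rf c x))

lemma pol_of_pos {c x : Circ} (f : Circ → ℝ) (h : 0 < sn (x - c)) :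
    pol c f x = max (f x) (f (rf c x)) ∧ pol c f (rf c x) = min (f x) (f (rf c x)) := by
  refine ⟨by simp [pol, h], ?_⟩
  have : ¬ 0 < sn (rf c x - c) := by rw [sn_rf]; linarith
  simp only [pol, this, if_false, rf_rf, min_comm]

lemma pol_of_neg {c x : Circ} (f : Circ → ℝ) (h : sn (x - c) < 0) :
    pol c f x = min (f x) (f (rf c x)) ∧ pol c f (rf c x) = max (f x) (f (rf c x)) := by
  refine ⟨by simp [pol, h.le], ?_⟩
  have : 0 < sn (rf c x - c) := by rw [sn_rf]; linarith
  simp only [pol, this, if_true, rf_rf, max_comm]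

lemma pol_of_zero {c x : Circ} (f : Circ → ℝ) (h : sn (x - c) = 0) :
    pol c f x = f x ∧ rf c x = x := by
  have := rf_eq_of_sn c x h
  simp [pol, this]

lemma measurable_pol {c : Circ} {f : Circ → ℝ} (hf : Measurable f) : Measurable (pol c f) := by
  refine Measurable.ite (measurableSet_lt measurable_const ?_) (hf.max (hf.comp (measurable_rf c)))
    (hf.min (hf.comp (measurable_rf c)))
  exact (continuous_sn.comp (continuous_id.sub continuous_const)).measurable

lemma pol_nonneg {c : Circ} {f : Circ → ℝ} (hf : ∀ x, 0 ≤ f x) (x : Circ) : 0 ≤ pol c f x := by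
  unfold pol; split_ifs
  · exact (hf x).trans (le_max_left _ _)
  · exact le_min (hf _) (hf _)

lemma pol_le {c : Circ} {f : Circ → ℝ} {M : ℝ} (hf : ∀ x, f x ≤ M) (x : Circ) : pol c f x ≤ M := by
  unfold pol; split_ifs
  · exact max_le (hf _) (hf _)
  · exact (min_le_left _ _).trans (hf x)

lemma pol_add {α : Type*} [AddCommMonoid α] (c : Circ) (f : Circ → ℝ) (ψ : ℝ → α) (x : Circ) :
    ψ (pol c f x) + ψ (pol c f (rf c x)) = ψ (f x) + ψ (f (rf c x)) := by
  rcases lt_trichotomy (sn (x - c)) 0 with h | h | h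
  · rw [(pol_of_neg f h).1, (pol_of_neg f h).2]
    rcases le_total (f x) (f (rf c x)) with h | h
    · rw [min_eq_left h, max_eq_right h]
    · rw [min_eq_right h, max_eq_left h, add_comm]
  · rw [(pol_of_zero f h).2, (pol_of_zero f h).1]
  · rw [(pol_of_pos f h).1, (pol_of_pos f h).2]
    rcases le_total (f x) (f (rf c x)) with h | h
    · rw [min_eq_left h, max_eq_right h, add_comm]
    · rw [min_eq_right h, max_eq_left h]

lemma lintegral_rf (c : Circ) (F : Circ → ENNReal) :
    ∫⁻ x, F (rf c x) = ∫⁻ x, F x := lintegral_sub_left_eq_self F (c + c)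

lemma integral_rf (c : Circ) (F : Circ → ℝ) :
    ∫ x, F (rf c x) = ∫ x, F x := integral_sub_left_eq_self F _ (c + c)

lemma Integrable.rf {F : Circ → ℝ} (hF : Integrable F) (c : Circ) :
    Integrable (fun x => F (rf c x)) := (rf_mp c).integrable_comp_of_integrable hF

lemma two_integral (c : Circ) {F : Circ → ℝ} (hF : Integrable F) :
    2 * ∫ x, F x = ∫ x, (F x + F (rf c x)) := by
  rw [integral_add hF (Integrable.rf hF c), integral_rf]; ring

lemma eqD_pol {c : Circ} {f : Circ → ℝ} (hf : Measurable f) : EqD (pol c f) f := by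
  intro t
  have hp := measurable_pol (c := c) hf
  have key : ∀ k : Circ → ℝ, Measurable k → 2 * volume {x : Circ | t < k x} =
      ∫⁻ x : Circ, ((if t < k x then (1 : ENNReal) else 0) + (if t < k (rf c x) then 1 else 0)) := by
    intro k hk
    have hm : Measurable fun x : Circ => if t < k x then (1 : ENNReal) else 0 :=
      Measurable.ite (measurableSet_lt measurable_const hk) measurable_const measurable_const
    rw [lintegral_add_left hm, lintegral_rf c (fun x => if t < k x then (1 : ENNReal) else 0),
      ← two_mul]
    congr 1
    rw [← lintegral_indicator_one (measurableSet_lt measurable_const hk)]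
    congr 1
  have h2 : 2 * volume {x : Circ | t < pol c f x} = 2 * volume {x : Circ | t < f x} := by
    rw [key _ hp, key _ hf]
    congr 1; funext x
    exact pol_add c f (fun s => if t < s then (1 : ENNReal) else 0) x
  exact (ENNReal.mul_right_inj (by simp) (by simp)).mp h2

lemma pol_comp (c : Circ) (f : Circ → ℝ) {φ : ℝ → ℝ} (hφ : Monotone φ) (x : Circ) :
    pol c (fun y => φ (f y)) x = φ (pol c f x) := by
  unfold pol; split_ifs
  · exact (hφ.map_max).symm
  · exact (hφ.map_min).symm

lemma abs_max_min_aux (a b c d : ℝ) :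
    |max a b - max c d| + |min a b - min c d| ≤ |a - c| + |b - d| := by
  rcases le_total a b with h1 | h1 <;> rcases le_total c d with h2 | h2 <;>
    simp only [h1, h2, max_eq_left, max_eq_right, min_eq_left, min_eq_right] <;>
    cases abs_cases (a - c) <;> cases abs_cases (b - d) <;> cases abs_cases (a - d) <;>
    cases abs_cases (b - c) <;> linarith

lemma pol_contr {c : Circ} {f h : Circ → ℝ} (hf : Integrable f) (hh : Integrable h)
    (hpf : Integrable (pol c f)) (hph : Integrable (pol c h)) :
    ∫ x, |pol c f x - pol c h x| ≤ ∫ x, |f x - h x| := by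
  have h1 := two_integral c (hpf.sub hph).abs
  have h2 := two_integral c (hf.sub hh).abs
  have h3 : ∫ x, (|(pol c f - pol c h) x| + |(pol c f - pol c h) (rf c x)|) ≤
      ∫ x, (|(f - h) x| + |(f - h) (rf c x)|) := by
    refine integral_mono ((hpf.sub hph).abs.add (Integrable.rf (hpf.sub hph).abs c))
      ((hf.sub hh).abs.add (Integrable.rf (hf.sub hh).abs c)) fun x => ?_
    simp only [Pi.sub_apply]
    rcases lt_trichotomy (sn (x - c)) 0 with hx | hx | hx
    · rw [(pol_of_neg f hx).1, (pol_of_neg f hx).2, (pol_of_neg h hx).1, (pol_of_neg h hx).2,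
        add_comm]
      exact abs_max_min_aux _ _ _ _
    · rw [(pol_of_zero f hx).2, (pol_of_zero f hx).1, (pol_of_zero h hx).1]
    · rw [(pol_of_pos f hx).1, (pol_of_pos f hx).2, (pol_of_pos h hx).1, (pol_of_pos h hx).2]
      exact abs_max_min_aux _ _ _ _
  simp only [Pi.sub_apply] at h1 h2 h3
  linarith

/-- modulus of continuity in terms of the cosine of the distance -/
def HasMod (f : Circ → ℝ) (δ ε : ℝ) : Prop := ∀ x y : Circ, δ < cs (x - y) → |f x - f y| ≤ ε

lemma abs_max_aux {a b c d e : ℝ} (h1 : |a - c| ≤ e) (h2 : |b - d| ≤ e) :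
    |max a b - max c d| ≤ e := (abs_max_sub_max_le_max a b c d).trans (max_le h1 h2)

lemma abs_min_aux {a b c d e : ℝ} (h1 : |a - c| ≤ e) (h2 : |b - d| ≤ e) :
    |min a b - min c d| ≤ e := (abs_min_sub_min_le_max a b c d).trans (max_le h1 h2)

lemma abs_mm_aux {a b c d e : ℝ} (h1 : |a - c| ≤ e) (h2 : |b - d| ≤ e) (h3 : |a - d| ≤ e)
    (h4 : |b - c| ≤ e) : |max a b - min c d| ≤ e := by
  rw [abs_le] at *
  rcases le_total a b with h | h <;> rcases le_total c d with h' | h' <;>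
    simp only [h, h', max_eq_left, max_eq_right, min_eq_left, min_eq_right] <;>
    constructor <;> linarith

lemma rf_sub_rf (c x y : Circ) : rf c x - rf c y = y - x := by simp [rf]

lemma rf_sub (c x y : Circ) : rf c x - y = rf c y - x := by simp only [rf]; abel

lemma cs_sub_comm (x y : Circ) : cs (x - y) = cs (y - x) := by rw [← cs_neg, neg_sub]

lemma hasMod_pol {c : Circ} {f : Circ → ℝ} {δ ε : ℝ} (h : HasMod f δ ε) :
    HasMod (pol c f) δ ε := by
  have main : ∀ x y : Circ, 0 < sn (x - c) → ¬ 0 < sn (y - c) → δ < cs (x - y) →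
      |pol c f x - pol c f y| ≤ ε := by
    intro x y hx hy hd
    simp only [pol, hx, hy, if_true, if_false]
    have hxy := cs_sub_cs c x y
    have hle : cs (x - y) ≤ cs (x - rf c y) := by
      nlinarith [not_lt.mp hy]
    refine abs_mm_aux (h _ _ hd) (h _ _ ?_) (h _ _ (hd.trans_le hle)) (h _ _ ?_)
    · rwa [rf_sub_rf, cs_sub_comm]
    · rw [rf_sub, cs_sub_comm]; exact hd.trans_le hle
  intro x y hd
  have hd' : δ < cs (rf c x - rf c y) := by rwa [rf_sub_rf, cs_sub_comm]
  by_cases hx : 0 < sn (x - c) <;> by_cases hy : 0 < sn (y - c)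
  · simp only [pol, hx, hy, if_true]
    exact abs_max_aux (h _ _ hd) (h _ _ hd')
  · exact main x y hx hy hd
  · rw [abs_sub_comm]; exact main y x hy hx (by rwa [cs_sub_comm])
  · simp only [pol, hx, hy, if_false]
    exact abs_min_aux (h _ _ hd) (h _ _ hd')

/-- iterated polarization -/
noncomputable def Tl (l : List Circ) (f : Circ → ℝ) : Circ → ℝ := l.foldr pol f

lemma Tl_nil (f : Circ → ℝ) : Tl [] f = f := rfl
lemma Tl_cons (c : Circ) (l : List Circ) (f : Circ → ℝ) : Tl (c :: l) f = pol c (Tl l f) := rfl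

lemma measurable_Tl (l : List Circ) {f : Circ → ℝ} (hf : Measurable f) : Measurable (Tl l f) := by
  induction l with
  | nil => exact hf
  | cons c l ih => exact measurable_pol ih

lemma Tl_nonneg (l : List Circ) {f : Circ → ℝ} (hf : ∀ x, 0 ≤ f x) : ∀ x, 0 ≤ Tl l f x := by
  induction l with
  | nil => exact hf
  | cons c l ih => exact pol_nonneg ih

lemma Tl_le (l : List Circ) {f : Circ → ℝ} {M : ℝ} (hf : ∀ x, f x ≤ M) : ∀ x, Tl l f x ≤ M := by
  induction l with
  | nil => exact hf
  | cons c l ih => exact pol_le ih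

lemma eqD_Tl (l : List Circ) {f : Circ → ℝ} (hf : Measurable f) : EqD (Tl l f) f := by
  induction l with
  | nil => exact fun t => rfl
  | cons c l ih => exact (eqD_pol (measurable_Tl l hf)).trans ih

lemma Tl_comp (l : List Circ) (f : Circ → ℝ) {φ : ℝ → ℝ} (hφ : Monotone φ) :
    Tl l (fun y => φ (f y)) = fun x => φ (Tl l f x) := by
  induction l with
  | nil => rfl
  | cons c l ih =>
    rw [Tl_cons, ih]; funext x; exact pol_comp c (Tl l f) hφ x

lemma hasMod_Tl (l : List Circ) {f : Circ → ℝ} {δ ε : ℝ} (hf : HasMod f δ ε) :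
    HasMod (Tl l f) δ ε := by
  induction l with
  | nil => exact hf
  | cons c l ih => exact hasMod_pol ih

lemma integrable_bdd' {f : Circ → ℝ} (hf : Measurable f) (hf0 : ∀ x, 0 ≤ f x) {M : ℝ}
    (hM : ∀ x, f x ≤ M) : Integrable f :=
  integrable_of_bdd hf (M := M) (.of_forall fun x => by rw [abs_of_nonneg (hf0 x)]; exact hM x)

lemma Tl_contr (l : List Circ) {f h : Circ → ℝ} (hf : Measurable f) (hh : Measurable h)
    (hf0 : ∀ x, 0 ≤ f x) (hh0 : ∀ x, 0 ≤ h x) {M : ℝ} (hfM : ∀ x, f x ≤ M) (hhM : ∀ x, h x ≤ M) :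
    ∫ x, |Tl l f x - Tl l h x| ≤ ∫ x, |f x - h x| := by
  induction l with
  | nil => exact le_rfl
  | cons c l ih =>
    refine le_trans ?_ ih
    have a := measurable_Tl l hf
    have b := measurable_Tl l hh
    exact pol_contr (integrable_bdd' a (Tl_nonneg l hf0) (Tl_le l hfM))
      (integrable_bdd' b (Tl_nonneg l hh0) (Tl_le l hhM))
      (integrable_bdd' (measurable_pol a) (pol_nonneg (Tl_nonneg l hf0)) (pol_le (Tl_le l hfM)))
      (integrable_bdd' (measurable_pol b) (pol_nonneg (Tl_nonneg l hh0)) (pol_le (Tl_le l hhM)))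

end CircRearr

namespace CircRearr
open Filter Topology

lemma pairs_of_rf {f : Circ → ℝ} (hf : Measurable f)
    (h : ∀ c : Circ, ∀ᵐ x : Circ, 0 ≤ (f x - f (rf c x)) * (cs x - cs (rf c x))) :
    ∀ᵐ p : Circ × Circ ∂(volume.prod volume), 0 ≤ (f p.1 - f p.2) * (cs p.1 - cs p.2) := by
  have hcs := continuous_cs.measurable
  have hS : MeasurableSet {p : Circ × Circ | 0 ≤ (f p.1 - f p.2) * (cs p.1 - cs p.2)} := by
    apply measurableSet_le measurable_const; fun_prop
  have h1 : ∀ b : Circ, ∀ᵐ x : Circ, 0 ≤ (f x - f (b - x)) * (cs x - cs (b - x)) := by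
    intro b
    obtain ⟨c, rfl⟩ := exists_half b
    exact h c
  have hS2 : MeasurableSet {p : Circ × Circ |
      0 ≤ (f p.2 - f (p.1 - p.2)) * (cs p.2 - cs (p.1 - p.2))} := by
    apply measurableSet_le measurable_const; fun_prop
  have h2 : ∀ᵐ p : Circ × Circ ∂(volume.prod volume),
      0 ≤ (f p.2 - f (p.1 - p.2)) * (cs p.2 - cs (p.1 - p.2)) := by
    rw [Measure.ae_prod_iff_ae_ae hS2]
    exact .of_forall h1
  rw [Measure.ae_prod_iff_ae_ae hS2, Measure.ae_ae_comm hS2] at h2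
  rw [Measure.ae_prod_iff_ae_ae hS]
  filter_upwards [h2] with x hx
  have := (measurePreserving_add_right (volume : Measure Circ) x).quasiMeasurePreserving.ae hx
  simpa using this

/-- test functional -/
noncomputable def Phi (f : Circ → ℝ) : ℝ := ∫ x, f x * cs x

lemma integrable_mul_cs {f : Circ → ℝ} (hf : Integrable f) : Integrable (fun x => f x * cs x) :=
  hf.mul_bdd (c := 1) continuous_cs.aestronglyMeasurable (.of_forall fun x => by simpa using abs_cs_le x)

lemma Phi_sub {f h : Circ → ℝ} (hf : Integrable f) (hh : Integrable h) :
    Phi f - Phi h ≤ ∫ x, |f x - h x| := by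
  unfold Phi
  rw [← integral_sub (integrable_mul_cs hf) (integrable_mul_cs hh)]
  refine integral_mono ((integrable_mul_cs hf).sub (integrable_mul_cs hh)) (hf.sub hh).abs
    fun x => ?_
  have h1 : f x * cs x - h x * cs x = (f x - h x) * cs x := by ring
  calc _ = (f x - h x) * cs x := h1
    _ ≤ |(f x - h x) * cs x| := le_abs_self _
    _ = |f x - h x| * |cs x| := abs_mul _ _
    _ ≤ |f x - h x| * 1 := by gcongr; exact abs_cs_le x
    _ = _ := mul_one _

lemma cs_sub_rf (c x : Circ) : cs x - cs (rf c x) = 2 * sn (x - c) * sn (0 - c) := by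
  rw [← cs_sub_cs, sub_zero, cs_sub_comm x]; simp [rf]

lemma sn_neg (x : Circ) : sn (-x) = - sn x := by
  obtain ⟨x, rfl⟩ := exists_coe x
  rw [← QuotientAddGroup.mk_neg]
  exact (sn_coe _).trans ((Real.sin_neg x).trans (by rw [sn_coe]))

lemma Phi_pol {c : Circ} (hc : sn c < 0) {f : Circ → ℝ} (hf : Integrable f)
    (hp : Integrable (pol c f)) :
    Phi f ≤ Phi (pol c f) ∧ (Phi (pol c f) ≤ Phi f →
      ∀ᵐ x : Circ, 0 ≤ (f x - f (rf c x)) * (cs x - cs (rf c x))) := by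
  have I := (integrable_mul_cs hp).sub (integrable_mul_cs hf)
  have h0 : Phi (pol c f) - Phi f = ∫ x, (pol c f x * cs x - f x * cs x) := by
    unfold Phi; rw [← integral_sub (integrable_mul_cs hp) (integrable_mul_cs hf)]
  have h1 := two_integral c I
  simp only [Pi.sub_apply] at h1
  rw [← h0] at h1
  have I2 := I.add (Integrable.rf I c)
  have key : ∀ x, 0 ≤ pol c f x * cs x - f x * cs x +
      (pol c f (rf c x) * cs (rf c x) - f (rf c x) * cs (rf c x)) ∧
      (pol c f x * cs x - f x * cs x +
      (pol c f (rf c x) * cs (rf c x) - f (rf c x) * cs (rf c x)) = 0 →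
        0 ≤ (f x - f (rf c x)) * (cs x - cs (rf c x))) := by
    intro x
    have hk := cs_sub_rf c x
    rw [zero_sub, sn_neg] at hk
    rcases lt_trichotomy (sn (x - c)) 0 with h | h | h
    · rw [(pol_of_neg f h).1, (pol_of_neg f h).2]
      have hk' : cs x - cs (rf c x) < 0 := by rw [hk]; nlinarith
      rcases le_total (f x) (f (rf c x)) with h | h
      · rw [min_eq_left h, max_eq_right h]
        refine ⟨by simp, fun _ => by nlinarith⟩
      · rw [min_eq_right h, max_eq_left h]
        refine ⟨by nlinarith, fun h0 => le_of_eq ?_⟩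
        linarith
    · rw [(pol_of_zero f h).2, (pol_of_zero f h).1]
      simp
    · rw [(pol_of_pos f h).1, (pol_of_pos f h).2]
      have hk' : 0 < cs x - cs (rf c x) := by rw [hk]; nlinarith
      rcases le_total (f x) (f (rf c x)) with h | h
      · rw [min_eq_left h, max_eq_right h]
        refine ⟨by nlinarith, fun h0 => le_of_eq ?_⟩
        linarith
      · rw [min_eq_right h, max_eq_left h]
        refine ⟨by simp, fun _ => by nlinarith⟩
  constructor
  · have : 0 ≤ 2 * (Phi (pol c f) - Phi f) := by
      rw [h1]; exact integral_nonneg fun x => (key x).1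
    linarith
  · intro hle
    have hz : ∫ x, (pol c f x * cs x - f x * cs x +
      (pol c f (rf c x) * cs (rf c x) - f (rf c x) * cs (rf c x))) = 0 := by
      apply le_antisymm
      · linarith
      · exact integral_nonneg fun x => (key x).1
    have := (integral_eq_zero_iff_of_nonneg (fun x => (key x).1) I2).mp hz
    filter_upwards [this] with x hx
    exact (key x).2 hx

lemma sn_add_pi (c : Circ) : sn (c + (π : ℝ)) = - sn c := by
  obtain ⟨c, rfl⟩ := exists_coe c
  rw [← AddCircle.coe_add, sn_coe, sn_coe, Real.sin_add_pi]

lemma rf_add_pi (c x : Circ) : rf (c + (π : ℝ)) x = rf c x := by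
  have : ((π : ℝ) : Circ) + (π : ℝ) = 0 := by
    rw [← AddCircle.coe_add, ← two_mul]; exact AddCircle.coe_period _
  unfold rf
  rw [show c + (π : ℝ) + (c + (π : ℝ)) - x = c + c - x + (((π : ℝ) : Circ) + (π : ℝ)) by abel, this,
    add_zero]

/-- maximal functions of the test functional are symmetric decreasing -/
lemma eq_R_of_Phi {f : Circ → ℝ} (hf : Measurable f) (hf0 : ∀ x, 0 ≤ f x) {M : ℝ}
    (hM : ∀ x, f x ≤ M) (h : ∀ c, sn c < 0 → Phi (pol c f) ≤ Phi f) : f =ᵐ[volume] R f := by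
  have I := integrable_bdd' hf hf0 hM
  have Ip : ∀ c, Integrable (pol c f) := fun c =>
    integrable_bdd' (measurable_pol hf) (pol_nonneg hf0) (pol_le hM)
  refine eq_R_of_mono hf hf0 (pairs_of_rf hf fun c => ?_)
  rcases lt_trichotomy (sn c) 0 with hc | hc | hc
  · exact (Phi_pol hc I (Ip c)).2 (h c hc)
  · refine .of_forall fun x => le_of_eq ?_
    rw [cs_sub_rf, zero_sub, sn_neg, hc]; simp
  · have hc' : sn (c + (π : ℝ)) < 0 := by rw [sn_add_pi]; linarith
    have := (Phi_pol hc' I (Ip _)).2 (h _ hc')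
    simpa only [rf_add_pi] using this

/-- uniform continuity in terms of cosines -/
def UC (f : Circ → ℝ) : Prop := ∀ ε > 0, ∃ δ < 1, HasMod f δ ε

lemma UC_of_continuous {f : Circ → ℝ} (hf : Continuous f) : UC f := by
  intro ε hε
  have hu := CompactSpace.uniformContinuous_of_continuous hf
  obtain ⟨d, hd, h⟩ := Metric.uniformContinuous_iff.mp hu ε hε
  refine ⟨Real.cos (min d π), ?_, fun x y hxy => ?_⟩
  · have : Real.cos (min d π) < Real.cos 0 :=
      Real.strictAntiOn_cos ⟨le_rfl, pi_pos.le⟩ ⟨(lt_min hd pi_pos).le, min_le_right _ _⟩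
        (lt_min hd pi_pos)
    simpa using this
  · have h3 : ‖x - y‖ < d := by
      rw [cs_eq_cos_norm] at hxy
      have := (Real.strictAntiOn_cos.lt_iff_gt ⟨(lt_min hd pi_pos).le, min_le_right _ _⟩
        ⟨norm_nonneg _, norm_le_pi _⟩).mp hxy
      exact this.trans_le (min_le_left _ _)
    have := h (a := x) (b := y) (by rwa [dist_eq_norm])
    rw [Real.dist_eq] at this; exact this.le

lemma cs_zero : cs 0 = 1 := by
  have := cs_coe 0; simpa using this

lemma nhds_of_cs {δ : ℝ} (hδ : δ < 1) (x : Circ) : ∀ᶠ y in 𝓝 x, δ < cs (x - y) := by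
  have hc : Continuous fun y => cs (x - y) := continuous_cs.comp (continuous_const.sub continuous_id)
  apply hc.continuousAt.eventually_const_lt
  simpa [cs_zero] using hδ

lemma UC.Tl {f : Circ → ℝ} (h : UC f) (l : List Circ) : UC (Tl l f) := by
  intro ε hε
  obtain ⟨δ, hδ, H⟩ := h ε hε
  exact ⟨δ, hδ, hasMod_Tl l H⟩

lemma equicont {ι : Type*} {F : ι → Circ → ℝ} (h : ∀ ε > 0, ∃ δ < 1, ∀ i, HasMod (F i) δ ε) :
    Equicontinuous F := by
  intro x
  rw [Metric.equicontinuousAt_iff_right]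
  intro ε hε
  obtain ⟨δ, hδ, H⟩ := h (ε / 2) (by linarith)
  filter_upwards [nhds_of_cs hδ x] with y hy i
  rw [Real.dist_eq]
  exact (H i x y hy).trans_lt (by linarith)

lemma UC.continuous {f : Circ → ℝ} (h : UC f) : Continuous f := by
  have : Equicontinuous (fun _ : Unit => f) := equicont fun ε hε => by
    obtain ⟨δ, hδ, H⟩ := h ε hε
    exact ⟨δ, hδ, fun _ => H⟩
  exact this.continuous ()

open BoundedContinuousFunction

noncomputable def bc (f : Circ → ℝ) (hf : Continuous f) (l : List Circ) : Circ →ᵇ ℝ :=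
  BoundedContinuousFunction.mkOfCompact ⟨Tl l f, ((UC_of_continuous hf).Tl l).continuous⟩

@[simp] lemma bc_apply (f : Circ → ℝ) (hf : Continuous f) (l : List Circ) (x : Circ) :
    bc f hf l x = Tl l f x := rfl

lemma compact_orbit {f : Circ → ℝ} (hf : Continuous f) {M : ℝ} (hf0 : ∀ x, 0 ≤ f x)
    (hM : ∀ x, f x ≤ M) : IsCompact (closure (Set.range (bc f hf))) := by
  refine BoundedContinuousFunction.arzela_ascoli (Set.Icc 0 M) isCompact_Icc _ ?_ ?_
  · rintro _ x ⟨l, rfl⟩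
    exact ⟨Tl_nonneg l hf0 x, Tl_le l hM x⟩
  · apply equicont
    intro ε hε
    obtain ⟨δ, hδ, H⟩ := UC_of_continuous hf ε hε
    refine ⟨δ, hδ, ?_⟩
    rintro ⟨_, l, rfl⟩
    exact hasMod_Tl l H

lemma L1_of_bcf {F : ℕ → Circ →ᵇ ℝ} {G : Circ →ᵇ ℝ} (h : Tendsto F atTop (𝓝 G)) :
    Tendsto (fun n => ∫ x, |F n x - G x|) atTop (𝓝 0) := by
  have h1 : Tendsto (fun n => ‖F n - G‖ * (2 * π)) atTop (𝓝 0) := by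
    have := (tendsto_iff_norm_sub_tendsto_zero.mp h).mul_const (2 * π)
    simpa using this
  refine squeeze_zero (fun n => integral_nonneg fun x => abs_nonneg _) (fun n => ?_) h1
  have := norm_integral_le_of_norm_le_const (μ := (volume : Measure Circ))
    (f := fun x => |F n x - G x|) (C := ‖F n - G‖) (.of_forall fun x => by
      have := (F n - G).norm_coe_le_norm x
      simpa using this)
  rw [Real.norm_eq_abs, abs_of_nonneg (integral_nonneg fun x => abs_nonneg _)] at this
  refine this.trans (le_of_eq ?_)
  congr 1
  rw [Measure.real, AddCircle.measure_univ, ENNReal.toReal_ofReal two_pi_pos.le]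

end CircRearr

namespace CircRearr
open Filter Topology
open BoundedContinuousFunction

lemma integral_abs_tri {f g h : Circ → ℝ} (hf : Integrable f) (hg : Integrable g)
    (hh : Integrable h) : ∫ x, |f x - h x| ≤ (∫ x, |f x - g x|) + ∫ x, |g x - h x| := by
  have : (∫ x, |f x - g x|) + (∫ x, |g x - h x|) = ∫ x, (|f x - g x| + |g x - h x|) :=
    (integral_add (hf.sub hg).abs (hg.sub hh).abs).symm
  rw [this]
  refine integral_mono (hf.sub hh).abs ((hf.sub hg).abs.add (hg.sub hh).abs) fun x => ?_
  exact abs_sub_le _ _ _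

lemma approx_continuous {u v : Circ → ℝ} (hu : Continuous u) (hv : Continuous v)
    (hu0 : ∀ x, 0 ≤ u x) (hv0 : ∀ x, 0 ≤ v x) {M : ℝ} (huM : ∀ x, u x ≤ M) (hvM : ∀ x, v x ≤ M)
    {ε : ℝ} (hε : 0 < ε) :
    ∃ l, (∫ x, |Tl l u x - R u x|) + (∫ x, |Tl l v x - R v x|) < ε := by
  have hM0 : 0 ≤ M := (hu0 0).trans (huM 0)
  have mu := hu.measurable
  have mv := hv.measurable
  have Iu : ∀ l, Integrable (Tl l u) := fun l =>
    integrable_bdd' (measurable_Tl l mu) (Tl_nonneg l hu0) (Tl_le l huM)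
  have Iv : ∀ l, Integrable (Tl l v) := fun l =>
    integrable_bdd' (measurable_Tl l mv) (Tl_nonneg l hv0) (Tl_le l hvM)
  let V : List Circ → ℝ := fun l => Phi (Tl l u) + Phi (Tl l v)
  have hbdd : BddAbove (Set.range V) := by
    refine ⟨(∫ x, |u x|) + ∫ x, |v x|, ?_⟩
    rintro _ ⟨l, rfl⟩
    have h1 := Phi_sub (Iu l) (integrable_zero _ _ _)
    have h2 := Phi_sub (Iv l) (integrable_zero _ _ _)
    have h0 : Phi 0 = 0 := by simp [Phi]
    have e1 : ∫ x, |Tl l u x| = ∫ x, |u x| := by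
      simp only [abs_of_nonneg (hu0 _), abs_of_nonneg (Tl_nonneg l hu0 _)]
      exact (eqD_Tl l mu).integral_eq (measurable_Tl l mu) mu
    have e2 : ∫ x, |Tl l v x| = ∫ x, |v x| := by
      simp only [abs_of_nonneg (hv0 _), abs_of_nonneg (Tl_nonneg l hv0 _)]
      exact (eqD_Tl l mv).integral_eq (measurable_Tl l mv) mv
    change Phi (Tl l u) - Phi 0 ≤ _ at h1
    change Phi (Tl l v) - Phi 0 ≤ _ at h2
    simp only [Pi.zero_apply, sub_zero, h0] at h1 h2
    simp only [V]
    linarith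
  let s := sSup (Set.range V)
  have hVs : ∀ l, V l ≤ s := fun l => le_csSup hbdd ⟨l, rfl⟩
  have hex : ∀ n : ℕ, ∃ l, s - 1 / ((n : ℝ) + 1) < V l := by
    intro n
    obtain ⟨_, ⟨l, rfl⟩, hl⟩ := exists_lt_of_lt_csSup (Set.range_nonempty V)
      (show s - 1 / ((n : ℝ) + 1) < s by
        have : (0 : ℝ) < 1 / ((n : ℝ) + 1) := by positivity
        linarith)
    exact ⟨l, hl⟩
  choose L hL using hex
  have hK := (compact_orbit hu hu0 huM).prod (compact_orbit hv hv0 hvM)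
  obtain ⟨⟨F, G⟩, hFG, φ, hφ, hlim⟩ := hK.tendsto_subseq
    (x := fun n => (bc u hu (L n), bc v hv (L n)))
    (fun n => ⟨subset_closure ⟨_, rfl⟩, subset_closure ⟨_, rfl⟩⟩)
  have hF : Tendsto (fun n => bc u hu (L (φ n))) atTop (𝓝 F) := (Prod.tendsto_iff _ _).mp hlim |>.1
  have hG : Tendsto (fun n => bc v hv (L (φ n))) atTop (𝓝 G) := (Prod.tendsto_iff _ _).mp hlim |>.2
  have eF := L1_of_bcf hF
  have eG := L1_of_bcf hG
  simp only [bc_apply] at eF eG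
  have bds : ∀ {w : Circ → ℝ} (hw : Continuous w) (hw0 : ∀ x, 0 ≤ w x) (hwM : ∀ x, w x ≤ M)
      {H : Circ →ᵇ ℝ} (hH : Tendsto (fun n => bc w hw (L (φ n))) atTop (𝓝 H)),
      (∀ x, 0 ≤ H x) ∧ (∀ x, H x ≤ M) := by
    intro w hw hw0 hwM H hH
    have hpt : ∀ x, Tendsto (fun n => bc w hw (L (φ n)) x) atTop (𝓝 (H x)) := fun x =>
      ((BoundedContinuousFunction.tendsto_iff_tendstoUniformly.mp hH).tendsto_at x)
    exact ⟨fun x => ge_of_tendsto' (hpt x) fun n => Tl_nonneg _ hw0 x,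
      fun x => le_of_tendsto' (hpt x) fun n => Tl_le _ hwM x⟩
  obtain ⟨hF0, hFM⟩ := bds hu hu0 huM hF
  obtain ⟨hG0, hGM⟩ := bds hv hv0 hvM hG
  have mF := F.continuous.measurable
  have mG := G.continuous.measurable
  have IF := integrable_bdd' mF hF0 hFM
  have IG := integrable_bdd' mG hG0 hGM
  have IpF : ∀ c, Integrable (pol c F) := fun c =>
    integrable_bdd' (measurable_pol mF) (pol_nonneg hF0) (pol_le hFM)
  have IpG : ∀ c, Integrable (pol c G) := fun c =>
    integrable_bdd' (measurable_pol mG) (pol_nonneg hG0) (pol_le hGM)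
  have main : ∀ c, Phi (pol c F) + Phi (pol c G) ≤ Phi F + Phi G := by
    intro c
    have hle : ∀ n, Phi (pol c F) + Phi (pol c G) - (Phi F + Phi G) ≤
        2 * (∫ x, |Tl (L (φ n)) u x - F x|) + 2 * (∫ x, |Tl (L (φ n)) v x - G x|) +
          1 / ((φ n : ℝ) + 1) := by
      intro n
      have a1 := Phi_sub (IpF c) (Iu (c :: L (φ n)))
      have a2 := Phi_sub (IpG c) (Iv (c :: L (φ n)))
      have b1 := pol_contr (c := c) IF (Iu (L (φ n))) (IpF c) (Iu (c :: L (φ n)))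
      have b2 := pol_contr (c := c) IG (Iv (L (φ n))) (IpG c) (Iv (c :: L (φ n)))
      have c1 := Phi_sub (Iu (L (φ n))) IF
      have c2 := Phi_sub (Iv (L (φ n))) IG
      have d1 := hVs (c :: L (φ n))
      have d2 := hL (φ n)
      simp only [V] at d1 d2
      simp only [Tl_cons] at a1 a2 b1 b2 d1
      have f1 : ∫ x, |F x - Tl (L (φ n)) u x| = ∫ x, |Tl (L (φ n)) u x - F x| := by
        simp only [abs_sub_comm]
      have f2 : ∫ x, |G x - Tl (L (φ n)) v x| = ∫ x, |Tl (L (φ n)) v x - G x| := by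
        simp only [abs_sub_comm]
      linarith
    have hlim0 : Tendsto (fun n => 2 * (∫ x, |Tl (L (φ n)) u x - F x|) +
        2 * (∫ x, |Tl (L (φ n)) v x - G x|) + 1 / ((φ n : ℝ) + 1)) atTop (𝓝 0) := by
      have t3 := (tendsto_one_div_add_atTop_nhds_zero_nat (𝕜 := ℝ)).comp hφ.tendsto_atTop
      have := ((eF.const_mul 2).add (eG.const_mul 2)).add t3
      simpa using this
    have := ge_of_tendsto' hlim0 hle
    linarith
  have RF : (F : Circ → ℝ) =ᵐ[volume] R F := by
    refine eq_R_of_Phi mF hF0 hFM fun c hc => ?_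
    have := (Phi_pol hc IG (IpG c)).1
    linarith [main c]
  have RG : (G : Circ → ℝ) =ᵐ[volume] R G := by
    refine eq_R_of_Phi mG hG0 hGM fun c hc => ?_
    have := (Phi_pol hc IF (IpF c)).1
    linarith [main c]
  have fin : ∀ {w : Circ → ℝ} (hw : Measurable w) (hw0 : ∀ x, 0 ≤ w x) (hwM : ∀ x, w x ≤ M)
      {H : Circ → ℝ} (hH : Measurable H) (hH0 : ∀ x, 0 ≤ H x) (hHM : ∀ x, H x ≤ M)
      (RH : H =ᵐ[volume] R H) (l : List Circ),
      ∫ x, |Tl l w x - R w x| ≤ 2 * ∫ x, |Tl l w x - H x| := by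
    intro w hw hw0 hwM H hH hH0 hHM RH l
    have I1 := integrable_bdd' (measurable_Tl l hw) (Tl_nonneg l hw0) (Tl_le l hwM)
    have I2 := integrable_bdd' hH hH0 hHM
    have I3 := integrable_R hH hM0 hHM
    have I4 := integrable_R (measurable_Tl l hw) hM0 (Tl_le l hwM)
    rw [← R_congr (eqD_Tl l hw)]
    have t1 := integral_abs_tri I1 I2 I4
    have t2 := R_contr hH (measurable_Tl l hw) hH0 (Tl_nonneg l hw0) hHM (Tl_le l hwM)
    have t3 : ∫ x, |H x - R (Tl l w) x| = ∫ x, |R H x - R (Tl l w) x| := by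
      apply integral_congr_ae
      filter_upwards [RH] with x hx
      rw [hx]
    have t4 : ∫ x, |H x - Tl l w x| = ∫ x, |Tl l w x - H x| := by
      simp only [abs_sub_comm]
    linarith
  have hlim0 : Tendsto (fun n => 2 * (∫ x, |Tl (L (φ n)) u x - F x|) +
        2 * (∫ x, |Tl (L (φ n)) v x - G x|)) atTop (𝓝 0) := by
    simpa using (eF.const_mul 2).add (eG.const_mul 2)
  obtain ⟨n, hn⟩ := ((tendsto_order.mp hlim0).2 ε hε).exists
  refine ⟨L (φ n), lt_of_le_of_lt ?_ hn⟩
  exact add_le_add (fin mu hu0 huM mF hF0 hFM RF _) (fin mv hv0 hvM mG hG0 hGM RG _)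

lemma exists_cont {u : Circ → ℝ} (hu : Measurable u) (hu0 : ∀ x, 0 ≤ u x) (huM : ∀ x, u x ≤ 1)
    {ε : ℝ} (hε : 0 < ε) : ∃ h : Circ → ℝ, Continuous h ∧ (∀ x, 0 ≤ h x) ∧ (∀ x, h x ≤ 1) ∧
      ∫ x, |u x - h x| ≤ ε := by
  have I := integrable_bdd' hu hu0 huM
  obtain ⟨k, hk, Ik⟩ := I.exists_boundedContinuous_integral_sub_le hε
  have hc : Continuous fun x => max 0 (min 1 (k x)) := by fun_prop
  refine ⟨fun x => max 0 (min 1 (k x)), hc, fun x => le_max_left _ _,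
    fun x => max_le zero_le_one (min_le_left _ _), ?_⟩
  refine le_trans (integral_mono ?_ ?_ fun x => ?_) hk
  · exact (I.sub (integrable_bdd' (M := 1) hc.measurable (fun x => le_max_left _ _)
      (fun x => max_le zero_le_one (min_le_left _ _)))).abs
  · exact (I.sub Ik).norm
  · simp only [Real.norm_eq_abs]
    have e : u x = max 0 (min 1 (u x)) := by rw [min_eq_right (huM x), max_eq_right (hu0 x)]
    have h1 := abs_max_sub_max_le_max 0 (min 1 (u x)) 0 (min 1 (k x))
    have h2 := abs_min_sub_min_le_max 1 (u x) 1 (k x)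
    rw [sub_self, abs_zero, max_eq_right (abs_nonneg (min 1 (u x) - min 1 (k x)))] at h1
    rw [sub_self, abs_zero, max_eq_right (abs_nonneg (u x - k x))] at h2
    have h3 := h1.trans h2
    rw [← e] at h3
    exact h3

lemma approx_measurable {u v : Circ → ℝ} (hu : Measurable u) (hv : Measurable v)
    (hu0 : ∀ x, 0 ≤ u x) (hv0 : ∀ x, 0 ≤ v x) (huM : ∀ x, u x ≤ 1) (hvM : ∀ x, v x ≤ 1)
    {ε : ℝ} (hε : 0 < ε) :
    ∃ l, (∫ x, |Tl l u x - R u x|) + (∫ x, |Tl l v x - R v x|) < ε := by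
  obtain ⟨a, ac, a0, a1, ha⟩ := exists_cont hu hu0 huM (show 0 < ε / 8 by linarith)
  obtain ⟨b, bc, b0, b1, hb⟩ := exists_cont hv hv0 hvM (show 0 < ε / 8 by linarith)
  obtain ⟨l, hl⟩ := approx_continuous ac bc a0 b0 a1 b1 (show 0 < ε / 4 by linarith)
  have fin : ∀ {w k : Circ → ℝ} (hw : Measurable w) (hw0 : ∀ x, 0 ≤ w x) (hwM : ∀ x, w x ≤ 1)
      (hk : Measurable k) (hk0 : ∀ x, 0 ≤ k x) (hkM : ∀ x, k x ≤ 1),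
      ∫ x, |Tl l w x - R w x| ≤ 2 * (∫ x, |w x - k x|) + ∫ x, |Tl l k x - R k x| := by
    intro w k hw hw0 hwM hk hk0 hkM
    have I1 := integrable_bdd' (measurable_Tl l hw) (Tl_nonneg l hw0) (Tl_le l hwM)
    have I2 := integrable_bdd' (measurable_Tl l hk) (Tl_nonneg l hk0) (Tl_le l hkM)
    have I3 := integrable_R hw zero_le_one hwM
    have I4 := integrable_R hk zero_le_one hkM
    have t1 := integral_abs_tri I1 I2 I3
    have t2 := integral_abs_tri I2 I4 I3
    have t3 := R_contr hk hw hk0 hw0 hkM hwM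
    have t4 := Tl_contr l hw hk hw0 hk0 hwM hkM
    have t5 : ∫ x, |k x - w x| = ∫ x, |w x - k x| := by simp only [abs_sub_comm]
    linarith
  refine ⟨l, ?_⟩
  have h1 := fin hu hu0 huM ac.measurable a0 a1
  have h2 := fin hv hv0 hvM bc.measurable b0 b1
  linarith

end CircRearr


namespace CircRearr
open Filter Topology

lemma conv_pair {J : ℝ → ℝ} (hJ : StrictConvexOn ℝ Set.univ J) {a b c d : ℝ} (h1 : b < a)
    (h2 : d < c) : J (a - c) + J (b - d) < J (a - d) + J (b - c) := by
  have hpos : 0 < (a - b) + (c - d) := by linarith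
  have hne : a - d ≠ b - c := by intro h; linarith
  have d1 : 0 < (a - b) / ((a - b) + (c - d)) := div_pos (by linarith) hpos
  have d2 : 0 < (c - d) / ((a - b) + (c - d)) := div_pos (by linarith) hpos
  have e1 := hJ.2 (Set.mem_univ (a - d)) (Set.mem_univ (b - c)) hne d1 d2
    (by rw [← add_div]; exact div_self hpos.ne')
  have e2 := hJ.2 (Set.mem_univ (a - d)) (Set.mem_univ (b - c)) hne d2 d1
    (by rw [← add_div, add_comm (c - d)]; exact div_self hpos.ne')
  have f1 : ((a - b) / ((a - b) + (c - d))) • (a - d) + ((c - d) / ((a - b) + (c - d))) • (b - c)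
      = a - c := by
    simp only [smul_eq_mul]; field_simp; ring
  have f2 : ((c - d) / ((a - b) + (c - d))) • (a - d) + ((a - b) / ((a - b) + (c - d))) • (b - c)
      = b - d := by
    simp only [smul_eq_mul]; field_simp; ring
  rw [f1] at e1
  rw [f2] at e2
  have f3 : ((a - b) / ((a - b) + (c - d))) + ((c - d) / ((a - b) + (c - d))) = 1 := by
    rw [← add_div]; exact div_self hpos.ne'
  simp only [smul_eq_mul] at e1 e2
  generalize (a - b) / ((a - b) + (c - d)) = s at *
  generalize (c - d) / ((a - b) + (c - d)) = t at *
  have : t = 1 - s := by linarith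
  subst this
  nlinarith

lemma conv_pair_le {J : ℝ → ℝ} (hJ : StrictConvexOn ℝ Set.univ J) {a b c d : ℝ} (h1 : b ≤ a)
    (h2 : d ≤ c) : J (a - c) + J (b - d) ≤ J (a - d) + J (b - c) := by
  rcases h1.eq_or_lt with rfl | h1
  · linarith
  rcases h2.eq_or_lt with rfl | h2
  · exact le_rfl
  exact (conv_pair hJ h1 h2).le

lemma conv_min {J : ℝ → ℝ} (hJ : StrictConvexOn ℝ Set.univ J) (a b c d : ℝ) :
    J (max a b - max c d) + J (min a b - min c d)
      = min (J (a - c) + J (b - d)) (J (a - d) + J (b - c)) ∧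
    J (max a b - min c d) + J (min a b - max c d)
      = max (J (a - c) + J (b - d)) (J (a - d) + J (b - c)) := by
  rcases le_total a b with h1 | h1 <;> rcases le_total c d with h2 | h2 <;>
    simp only [h1, h2, max_eq_left, max_eq_right, min_eq_left, min_eq_right] <;>
    have h3 := conv_pair_le hJ h1 h2
  · rw [min_eq_left (by linarith), max_eq_right (by linarith)]; constructor <;> ring
  · rw [min_eq_right (by linarith), max_eq_left (by linarith)]; constructor <;> ring
  · rw [min_eq_right (by linarith), max_eq_left (by linarith)]; constructor <;> ring
  · rw [min_eq_left (by linarith), max_eq_right (by linarith)]; constructor <;> ring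

lemma min_max_le {P Q A B : ℝ} (h : B < A) :
    min P Q * A + max P Q * B ≤ P * A + Q * B ∧
    (P * A + Q * B ≤ min P Q * A + max P Q * B → P ≤ Q) := by
  rcases le_total P Q with h1 | h1
  · rw [min_eq_left h1, max_eq_right h1]; exact ⟨le_rfl, fun _ => h1⟩
  · rw [min_eq_right h1, max_eq_left h1]
    refine ⟨by nlinarith, fun h2 => ?_⟩
    by_contra h3
    push Not at h3
    nlinarith [mul_pos (sub_pos.mpr h3) (sub_pos.mpr h)]

structure Ker (G : Circ → ℝ) : Prop where
  meas : Measurable G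
  nonneg : ∀ x, 0 ≤ G x
  even : ∀ x, G (-x) = G x
  dec : ∀ x y, x ≠ 0 → cs y < cs x → G y < G x

/-- Four-term symmetrised integrand. -/
noncomputable def S4 (J : ℝ → ℝ) (G : Circ → ℝ) (c : Circ) (u v : Circ → ℝ) (x y : Circ) : ℝ :=
  (J (u x - v y) + J (u (rf c x) - v (rf c y))) * G (x - y) +
  (J (u x - v (rf c y)) + J (u (rf c x) - v y)) * G (x - rf c y)

lemma S4_pol {J : ℝ → ℝ} (hJ : StrictConvexOn ℝ Set.univ J) {G : Circ → ℝ} (hG : Ker G)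
    (c : Circ) (u v : Circ → ℝ) {x y : Circ} (hxy : x ≠ y) (hxy' : x ≠ rf c y) :
    S4 J G c (pol c u) (pol c v) x y ≤ S4 J G c u v x y ∧
    (S4 J G c u v x y ≤ S4 J G c (pol c u) (pol c v) x y →
      0 ≤ ((u x - u (rf c x)) * sn (x - c)) * ((v y - v (rf c y)) * sn (y - c))) := by
  have hcs := cs_sub_cs c x y
  obtain ⟨m1, m2⟩ := conv_min hJ (u x) (u (rf c x)) (v y) (v (rf c y))
  set P := J (u x - v y) + J (u (rf c x) - v (rf c y)) with hP
  set Q := J (u x - v (rf c y)) + J (u (rf c x) - v y) with hQ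
  have hAB : 0 < sn (x - c) * sn (y - c) → G (x - rf c y) < G (x - y) := fun h =>
    hG.dec _ _ (sub_ne_zero.mpr hxy) (by nlinarith)
  have hBA : sn (x - c) * sn (y - c) < 0 → G (x - y) < G (x - rf c y) := fun h =>
    hG.dec _ _ (sub_ne_zero.mpr hxy') (by nlinarith)
  have hPQ : P ≤ Q → 0 ≤ (u x - u (rf c x)) * (v y - v (rf c y)) := by
    intro h
    by_contra hn
    push Not at hn
    rcases mul_neg_iff.mp hn with ⟨h1, h2⟩ | ⟨h1, h2⟩
    · have := conv_pair hJ (sub_pos.mp h1) (sub_neg.mp h2); linarith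
    · have := conv_pair hJ (sub_neg.mp h1) (sub_pos.mp h2); linarith
  have hQP : Q ≤ P → (u x - u (rf c x)) * (v y - v (rf c y)) ≤ 0 := by
    intro h
    by_contra hn
    push Not at hn
    rcases mul_pos_iff.mp hn with ⟨h1, h2⟩ | ⟨h1, h2⟩
    · have := conv_pair hJ (sub_pos.mp h1) (sub_pos.mp h2); linarith
    · have := conv_pair hJ (sub_neg.mp h1) (sub_neg.mp h2); linarith
  have fin1 : 0 < sn (x - c) * sn (y - c) →
      S4 J G c (pol c u) (pol c v) x y = min P Q * G (x - y) + max P Q * G (x - rf c y) →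
      _ := fun hs he => show S4 J G c (pol c u) (pol c v) x y ≤ S4 J G c u v x y ∧
    (S4 J G c u v x y ≤ S4 J G c (pol c u) (pol c v) x y →
      0 ≤ ((u x - u (rf c x)) * sn (x - c)) * ((v y - v (rf c y)) * sn (y - c))) by
    have := min_max_le (P := P) (Q := Q) (hAB hs)
    rw [he]
    refine ⟨this.1, fun h => ?_⟩
    have h2 := hPQ (this.2 h)
    calc 0 ≤ ((u x - u (rf c x)) * (v y - v (rf c y))) * (sn (x - c) * sn (y - c)) :=
          mul_nonneg h2 hs.le
      _ = _ := by ring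
  have fin2 : sn (x - c) * sn (y - c) < 0 →
      S4 J G c (pol c u) (pol c v) x y = max P Q * G (x - y) + min P Q * G (x - rf c y) →
      _ := fun hs he => show S4 J G c (pol c u) (pol c v) x y ≤ S4 J G c u v x y ∧
    (S4 J G c u v x y ≤ S4 J G c (pol c u) (pol c v) x y →
      0 ≤ ((u x - u (rf c x)) * sn (x - c)) * ((v y - v (rf c y)) * sn (y - c))) by
    have := min_max_le (P := Q) (Q := P) (hBA hs)
    rw [min_comm, max_comm] at this
    rw [he]
    refine ⟨by unfold S4; linarith [this.1], fun h => ?_⟩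
    have h2 := hQP (this.2 (by unfold S4 at h; linarith))
    calc 0 ≤ ((u x - u (rf c x)) * (v y - v (rf c y))) * (sn (x - c) * sn (y - c)) :=
          mul_nonneg_of_nonpos_of_nonpos h2 hs.le
      _ = _ := by ring
  rcases lt_trichotomy (sn (x - c)) 0 with hx | hx | hx
  · obtain ⟨x1, x2⟩ := pol_of_neg u hx
    rcases lt_trichotomy (sn (y - c)) 0 with hy | hy | hy
    · obtain ⟨y1, y2⟩ := pol_of_neg v hy
      refine fin1 (mul_pos_of_neg_of_neg hx hy) ?_
      unfold S4; rw [x1, x2, y1, y2, ← m1, ← m2]; ring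
    · obtain ⟨y1, y2⟩ := pol_of_zero v hy
      refine ⟨?_, fun _ => by rw [hy]; simp⟩
      unfold S4; rw [y2, y1]
      have := pol_add c u (fun t => J (t - v y)) x
      rw [this]
    · obtain ⟨y1, y2⟩ := pol_of_pos v hy
      refine fin2 (mul_neg_of_neg_of_pos hx hy) ?_
      unfold S4; rw [x1, x2, y1, y2, ← m1, ← m2]; ring
  · obtain ⟨x1, x2⟩ := pol_of_zero u hx
    refine ⟨?_, fun _ => by rw [hx]; simp⟩
    unfold S4; rw [x2, x1]
    have := pol_add c v (fun t => J (u x - t)) y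
    rw [this, add_comm (J (u x - pol c v (rf c y))), this]
    exact le_of_eq (by ring)
  · obtain ⟨x1, x2⟩ := pol_of_pos u hx
    rcases lt_trichotomy (sn (y - c)) 0 with hy | hy | hy
    · obtain ⟨y1, y2⟩ := pol_of_neg v hy
      refine fin2 (mul_neg_of_pos_of_neg hx hy) ?_
      unfold S4; rw [x1, x2, y1, y2, ← m1, ← m2]
    · obtain ⟨y1, y2⟩ := pol_of_zero v hy
      refine ⟨?_, fun _ => by rw [hy]; simp⟩
      unfold S4; rw [y2, y1]
      have := pol_add c u (fun t => J (t - v y)) x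
      rw [this]
    · obtain ⟨y1, y2⟩ := pol_of_pos v hy
      refine fin1 (mul_pos hx hy) ?_
      unfold S4; rw [x1, x2, y1, y2, ← m1, ← m2]

noncomputable def E (J : ℝ → ℝ) (G : Circ → ℝ) (u v : Circ → ℝ) : ENNReal :=
  ∫⁻ p : Circ × Circ, ENNReal.ofReal (J (u p.1 - v p.2) * G (p.1 - p.2)) ∂(volume.prod volume)

lemma J_cont {J : ℝ → ℝ} (hJ : StrictConvexOn ℝ Set.univ J) : Continuous J := by
  have := hJ.convexOn.continuousOn isOpen_univ
  exact continuousOn_univ.mp this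

lemma meas_E {J : ℝ → ℝ} (hJ : StrictConvexOn ℝ Set.univ J) {G : Circ → ℝ} (hG : Ker G)
    {u v : Circ → ℝ} (hu : Measurable u) (hv : Measurable v) :
    Measurable fun p : Circ × Circ => ENNReal.ofReal (J (u p.1 - v p.2) * G (p.1 - p.2)) := by
  have h1 := (J_cont hJ).measurable
  have h2 := hG.meas
  have h3 : Measurable fun p : Circ × Circ => p.1 - p.2 :=
    (continuous_fst.sub continuous_snd).measurable
  have := (h1.comp ((hu.comp measurable_fst).sub (hv.comp measurable_snd))).mul (h2.comp h3)
  exact this.ennreal_ofReal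

lemma four_E {J : ℝ → ℝ} (hJ0 : ∀ t, 0 ≤ J t) (hJ : StrictConvexOn ℝ Set.univ J) {G : Circ → ℝ}
    (hG : Ker G) (c : Circ) {u v : Circ → ℝ} (hu : Measurable u) (hv : Measurable v) :
    4 * E J G u v = ∫⁻ p : Circ × Circ, ENNReal.ofReal (S4 J G c u v p.1 p.2)
      ∂(volume.prod volume) := by
  have hk := meas_E hJ hG hu hv
  set k := fun p : Circ × Circ => ENNReal.ofReal (J (u p.1 - v p.2) * G (p.1 - p.2)) with hkd
  have mp1 : MeasurePreserving (Prod.map (rf c) id) ((volume : Measure Circ).prod (volume : Measure Circ)) (volume.prod volume) :=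
    (rf_mp c).prod (MeasurePreserving.id _)
  have mp2 : MeasurePreserving (Prod.map id (rf c)) ((volume : Measure Circ).prod (volume : Measure Circ)) (volume.prod volume) :=
    (MeasurePreserving.id _).prod (rf_mp c)
  have mp3 : MeasurePreserving (Prod.map (rf c) (rf c)) ((volume : Measure Circ).prod (volume : Measure Circ)) (volume.prod volume) :=
    (rf_mp c).prod (rf_mp c)
  have hS : ∀ p : Circ × Circ, ENNReal.ofReal (S4 J G c u v p.1 p.2) =
      k p + k (Prod.map (rf c) (rf c) p) + k (Prod.map id (rf c) p) + k (Prod.map (rf c) id p) := by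
    intro p
    have e1 : G (rf c p.1 - rf c p.2) = G (p.1 - p.2) := by
      rw [rf_sub_rf, ← hG.even, neg_sub]
    have e2 : G (rf c p.1 - p.2) = G (p.1 - rf c p.2) := by
      rw [rf_sub, ← hG.even, neg_sub]
    simp only [hkd, Prod.map_fst, Prod.map_snd, id, e1, e2]
    rw [← ENNReal.ofReal_add, ← ENNReal.ofReal_add, ← ENNReal.ofReal_add]
    · congr 1; unfold S4; ring
    all_goals
      first
      | exact mul_nonneg (hJ0 _) (hG.nonneg _)
      | exact add_nonneg (mul_nonneg (hJ0 _) (hG.nonneg _)) (mul_nonneg (hJ0 _) (hG.nonneg _))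
      | exact add_nonneg (add_nonneg (mul_nonneg (hJ0 _) (hG.nonneg _)) (mul_nonneg (hJ0 _) (hG.nonneg _))) (mul_nonneg (hJ0 _) (hG.nonneg _))
  simp only [hS]
  have q1 : Measurable fun p => k (Prod.map (rf c) id p) := hk.comp mp1.measurable
  have q2 : Measurable fun p => k (Prod.map id (rf c) p) := hk.comp mp2.measurable
  have q3 : Measurable fun p => k (Prod.map (rf c) (rf c) p) := hk.comp mp3.measurable
  rw [lintegral_add_right _ q1, lintegral_add_right _ q2, lintegral_add_right _ q3,
    mp1.lintegral_comp hk, mp2.lintegral_comp hk, mp3.lintegral_comp hk]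
  change 4 * E J G u v = E J G u v + E J G u v + E J G u v + E J G u v
  ring

lemma ae_prod_ne (c : Circ) : ∀ᵐ p : Circ × Circ ∂((volume : Measure Circ).prod volume),
    p.1 ≠ p.2 ∧ p.1 ≠ rf c p.2 := by
  have m1 : MeasurableSet {p : Circ × Circ | p.1 ≠ p.2} :=
    (isClosed_eq continuous_fst continuous_snd).isOpen_compl.measurableSet
  have m2 : MeasurableSet {p : Circ × Circ | p.1 ≠ rf c p.2} :=
    (isClosed_eq continuous_fst ((continuous_rf c).comp continuous_snd)).isOpen_compl.measurableSet
  have h1 : ∀ᵐ p : Circ × Circ ∂((volume : Measure Circ).prod volume), p.1 ≠ p.2 := by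
    rw [Measure.ae_prod_iff_ae_ae m1]
    exact .of_forall fun x => (ae_ne x).mono fun y hy => hy.symm
  have h2 : ∀ᵐ p : Circ × Circ ∂((volume : Measure Circ).prod volume), p.1 ≠ rf c p.2 := by
    rw [Measure.ae_prod_iff_ae_ae m2]
    refine .of_forall fun x => (ae_ne (rf c x)).mono fun y hy h => hy ?_
    simp only at h
    rw [h, rf_rf]
  exact h1.and h2

lemma E_pol_le {J : ℝ → ℝ} (hJ0 : ∀ t, 0 ≤ J t) (hJ : StrictConvexOn ℝ Set.univ J) {G : Circ → ℝ}
    (hG : Ker G) (c : Circ) {u v : Circ → ℝ} (hu : Measurable u) (hv : Measurable v) :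
    E J G (pol c u) (pol c v) ≤ E J G u v := by
  have h : 4 * E J G (pol c u) (pol c v) ≤ 4 * E J G u v := by
    rw [four_E hJ0 hJ hG c hu hv, four_E hJ0 hJ hG c (measurable_pol hu) (measurable_pol hv)]
    refine lintegral_mono_ae ?_
    filter_upwards [ae_prod_ne c] with p hp
    exact ENNReal.ofReal_le_ofReal (S4_pol hJ hG c u v hp.1 hp.2).1
  exact (ENNReal.mul_le_mul_iff_right (by norm_num) (by norm_num)).mp h

lemma E_pol_eq {J : ℝ → ℝ} (hJ0 : ∀ t, 0 ≤ J t) (hJ : StrictConvexOn ℝ Set.univ J) {G : Circ → ℝ}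
    (hG : Ker G) (c : Circ) {u v : Circ → ℝ} (hu : Measurable u) (hv : Measurable v)
    (hfin : E J G u v ≠ ⊤) (heq : E J G u v ≤ E J G (pol c u) (pol c v)) :
    ∀ᵐ p : Circ × Circ ∂((volume : Measure Circ).prod volume),
      0 ≤ ((u p.1 - u (rf c p.1)) * sn (p.1 - c)) * ((v p.2 - v (rf c p.2)) * sn (p.2 - c)) := by
  have hle : ∀ᵐ p : Circ × Circ ∂((volume : Measure Circ).prod volume),
      ENNReal.ofReal (S4 J G c (pol c u) (pol c v) p.1 p.2) ≤
      ENNReal.ofReal (S4 J G c u v p.1 p.2) := by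
    filter_upwards [ae_prod_ne c] with p hp
    exact ENNReal.ofReal_le_ofReal (S4_pol hJ hG c u v hp.1 hp.2).1
  have f1 := four_E hJ0 hJ hG c hu hv
  have f2 := four_E hJ0 hJ hG c (measurable_pol (c := c) hu) (measurable_pol (c := c) hv)
  have mS : AEMeasurable (fun p : Circ × Circ => ENNReal.ofReal (S4 J G c u v p.1 p.2))
      ((volume : Measure Circ).prod volume) := by
    have h1 := (J_cont hJ).measurable
    have h2 := hG.meas
    have h3 : Measurable fun p : Circ × Circ => p.1 - p.2 :=
      (continuous_fst.sub continuous_snd).measurable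
    have h4 : Measurable fun p : Circ × Circ => p.1 - rf c p.2 :=
      (continuous_fst.sub ((continuous_rf c).comp continuous_snd)).measurable
    have h5 := measurable_rf c
    have h6 := h2.comp h3
    have h7 := h2.comp h4
    simp only [Function.comp_def] at h6 h7
    unfold S4
    refine Measurable.aemeasurable ?_
    refine Measurable.ennreal_ofReal ?_
    fun_prop
  have hE : E J G (pol c u) (pol c v) ≠ ⊤ :=
    ne_top_of_le_ne_top hfin (E_pol_le hJ0 hJ hG c hu hv)
  have := ae_eq_of_ae_le_of_lintegral_le hle (by rw [← f2]; exact ENNReal.mul_ne_top (by norm_num) hE)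
    mS (by rw [← f1, ← f2]; gcongr)
  filter_upwards [this, ae_prod_ne c] with p hp hne
  refine (S4_pol hJ hG c u v hne.1 hne.2).2 ?_
  have nn : ∀ u v : Circ → ℝ, 0 ≤ S4 J G c u v p.1 p.2 := fun u v =>
    add_nonneg (mul_nonneg (add_nonneg (hJ0 _) (hJ0 _)) (hG.nonneg _))
      (mul_nonneg (add_nonneg (hJ0 _) (hJ0 _)) (hG.nonneg _))
  exact ((ENNReal.ofReal_eq_ofReal_iff (nn _ _) (nn _ _)).mp hp).ge

end CircRearr


namespace CircRearr
open Filter Topology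

lemma ae_subseq {F : ℕ → Circ → ℝ} {f : Circ → ℝ} (hF : ∀ n, Integrable (F n)) (hf : Integrable f)
    (h : Tendsto (fun n => ∫ x, |F n x - f x|) atTop (𝓝 0)) :
    ∃ ns : ℕ → ℕ, StrictMono ns ∧ ∀ᵐ x : Circ, Tendsto (fun i => F (ns i) x) atTop (𝓝 (f x)) := by
  refine TendstoInMeasure.exists_seq_tendsto_ae (tendstoInMeasure_of_tendsto_eLpNorm
    (p := 1) one_ne_zero (fun n => (hF n).aestronglyMeasurable) hf.aestronglyMeasurable ?_)
  have e : ∀ n, eLpNorm (F n - f) 1 volume = ENNReal.ofReal (∫ x, |F n x - f x|) := by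
    intro n
    rw [eLpNorm_one_eq_lintegral_enorm]
    exact (ofReal_integral_norm_eq_lintegral_enorm ((hF n).sub hf)).symm
  simp only [e]
  simpa [Function.comp_def] using (ENNReal.continuous_ofReal.tendsto 0).comp h

/-- bounded strictly increasing change of levels -/
noncomputable def ph (t : ℝ) : ℝ := arctan t / 2

lemma ph_strictMono : StrictMono ph := fun a b h => by
  have := arctan_strictMono h
  unfold ph; linarith

lemma ph_zero : ph 0 = 0 := by simp [ph]
lemma ph_nonneg {t : ℝ} (h : 0 ≤ t) : 0 ≤ ph t := by
  rw [← ph_zero]; exact ph_strictMono.monotone h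
lemma ph_le (t : ℝ) : ph t ≤ 1 := by
  have := (arctan_lt_pi_div_two t).le
  have := pi_le_four
  unfold ph; linarith
lemma measurable_ph : Measurable ph := (ph_strictMono.monotone).measurable

lemma ph_tendsto {a : ℕ → ℝ} {b : ℝ} (h : Tendsto (fun n => ph (a n)) atTop (𝓝 (ph b))) :
    Tendsto a atTop (𝓝 b) := by
  have h2 : Tendsto (fun n => arctan (a n)) atTop (𝓝 (arctan b)) := by
    have := h.const_mul 2
    simp only [ph] at this
    convert this using 2 <;> ring_nf
  have h3 : ContinuousAt tan (arctan b) := continuousAt_tan.mpr (cos_arctan_pos b).ne'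
  have := h3.tendsto.comp h2
  simpa [Function.comp_def, tan_arctan] using this

lemma R_pairs {f : Circ → ℝ} (hf : Measurable f) :
    ∀ᵐ p : Circ × Circ ∂(volume.prod volume), 0 ≤ (R f p.1 - R f p.2) * (cs p.1 - cs p.2) := by
  have m : MeasurableSet {p : Circ × Circ | p.1 ≠ 0 ∧ p.2 ≠ 0} :=
    ((isOpen_ne.preimage continuous_fst).inter (isOpen_ne.preimage continuous_snd)).measurableSet
  have : ∀ᵐ p : Circ × Circ ∂(volume.prod volume), p.1 ≠ 0 ∧ p.2 ≠ 0 := by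
    rw [Measure.ae_prod_iff_ae_ae m]
    filter_upwards [ae_ne 0] with x hx
    filter_upwards [ae_ne 0] with y hy
    exact ⟨hx, hy⟩
  filter_upwards [this] with p hp
  rcases le_total ‖p.1‖ ‖p.2‖ with h | h
  · exact mul_nonneg (sub_nonneg.mpr (R_anti hf hp.1 h)) (sub_nonneg.mpr (cs_le_iff.mpr h))
  · exact mul_nonneg_of_nonpos_of_nonpos (sub_nonpos.mpr (R_anti hf hp.2 h))
      (sub_nonpos.mpr (cs_le_iff.mpr h))

lemma EqD.comp {f h : Circ → ℝ} (hf : Measurable f) (hh : Measurable h) (H : EqD f h)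
    {ψ : ℝ → ℝ} (hψ : Measurable ψ) : EqD (fun x => ψ (f x)) (fun x => ψ (h x)) := by
  intro t
  have m : MeasurableSet {s | t < ψ s} := measurableSet_lt measurable_const hψ
  have e1 := Measure.map_apply (μ := volume) hf m
  have e2 := Measure.map_apply (μ := volume) hh m
  rw [H.map_eq hf hh, e2] at e1
  exact e1.symm

lemma R_comp {f : Circ → ℝ} (hf : Measurable f) (hf0 : ∀ x, 0 ≤ f x) :
    (fun x => ph (R f x)) =ᵐ[volume] R (fun x => ph (f x)) := by
  have h1 := EqD.comp (measurable_R hf) hf (eqD_R hf hf0) measurable_ph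
  rw [← R_congr h1]
  refine eq_R_of_mono (measurable_ph.comp (measurable_R hf)) (fun x => ph_nonneg (R_nonneg f x)) ?_
  filter_upwards [R_pairs hf] with p hp
  rcases lt_trichotomy (R f p.1) (R f p.2) with h | h | h
  · have h2 := ph_strictMono h
    have : cs p.1 - cs p.2 ≤ 0 := by
      by_contra hc; push Not at hc; nlinarith [mul_pos (sub_pos.mpr h) hc]
    exact mul_nonneg_of_nonpos_of_nonpos (by linarith) this
  · rw [h]; simp
  · have h2 := ph_strictMono h
    have : 0 ≤ cs p.1 - cs p.2 := by
      by_contra hc; push Not at hc; nlinarith [mul_pos (sub_pos.mpr h) (neg_pos.mpr hc)]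
    exact mul_nonneg (by linarith) this

lemma E_Tl_le {J : ℝ → ℝ} (hJ0 : ∀ t, 0 ≤ J t) (hJ : StrictConvexOn ℝ Set.univ J) {G : Circ → ℝ}
    (hG : Ker G) (l : List Circ) {u v : Circ → ℝ} (hu : Measurable u) (hv : Measurable v) :
    E J G (Tl l u) (Tl l v) ≤ E J G u v := by
  induction l with
  | nil => exact le_rfl
  | cons c l ih =>
    exact (E_pol_le hJ0 hJ hG c (measurable_Tl l hu) (measurable_Tl l hv)).trans ih

lemma E_R_le {J : ℝ → ℝ} (hJ0 : ∀ t, 0 ≤ J t) (hJ : StrictConvexOn ℝ Set.univ J) {G : Circ → ℝ}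
    (hG : Ker G) {u v : Circ → ℝ} (hu : Measurable u) (hv : Measurable v)
    (hu0 : ∀ x, 0 ≤ u x) (hv0 : ∀ x, 0 ≤ v x) :
    E J G (R u) (R v) ≤ E J G u v := by
  have mu : Measurable fun x => ph (u x) := measurable_ph.comp hu
  have mv : Measurable fun x => ph (v x) := measurable_ph.comp hv
  have u0 : ∀ x, 0 ≤ ph (u x) := fun x => ph_nonneg (hu0 x)
  have v0 : ∀ x, 0 ≤ ph (v x) := fun x => ph_nonneg (hv0 x)
  have u1 : ∀ x, ph (u x) ≤ 1 := fun x => ph_le _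
  have v1 : ∀ x, ph (v x) ≤ 1 := fun x => ph_le _
  have hex : ∀ n : ℕ, ∃ l, (∫ x, |Tl l (fun x => ph (u x)) x - R (fun x => ph (u x)) x|) +
      (∫ x, |Tl l (fun x => ph (v x)) x - R (fun x => ph (v x)) x|) < 1 / ((n : ℝ) + 1) := fun n =>
    approx_measurable mu mv u0 v0 u1 v1 (by positivity)
  choose L hL using hex
  have Iu : ∀ l, Integrable (Tl l (fun x => ph (u x))) := fun l =>
    integrable_bdd' (measurable_Tl l mu) (Tl_nonneg l u0) (Tl_le l u1)
  have Iv : ∀ l, Integrable (Tl l (fun x => ph (v x))) := fun l =>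
    integrable_bdd' (measurable_Tl l mv) (Tl_nonneg l v0) (Tl_le l v1)
  have tu : Tendsto (fun n => ∫ x, |Tl (L n) (fun x => ph (u x)) x - R (fun x => ph (u x)) x|)
      atTop (𝓝 0) := by
    refine squeeze_zero (fun n => integral_nonneg fun x => abs_nonneg _) (fun n => ?_)
      tendsto_one_div_add_atTop_nhds_zero_nat
    have : 0 ≤ ∫ x, |Tl (L n) (fun x => ph (v x)) x - R (fun x => ph (v x)) x| :=
      integral_nonneg fun x => abs_nonneg _
    linarith [hL n]
  have tv : Tendsto (fun n => ∫ x, |Tl (L n) (fun x => ph (v x)) x - R (fun x => ph (v x)) x|)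
      atTop (𝓝 0) := by
    refine squeeze_zero (fun n => integral_nonneg fun x => abs_nonneg _) (fun n => ?_)
      tendsto_one_div_add_atTop_nhds_zero_nat
    have : 0 ≤ ∫ x, |Tl (L n) (fun x => ph (u x)) x - R (fun x => ph (u x)) x| :=
      integral_nonneg fun x => abs_nonneg _
    linarith [hL n]
  obtain ⟨ns, hns, au⟩ := ae_subseq (fun n => Iu (L n)) (integrable_R mu zero_le_one u1) tu
  obtain ⟨ms, hms, av⟩ := ae_subseq (fun n => Iv (L (ns n))) (integrable_R mv zero_le_one v1)
    (tv.comp hns.tendsto_atTop)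
  have au' : ∀ᵐ x : Circ, Tendsto (fun i => Tl (L (ns (ms i))) u x) atTop (𝓝 (R u x)) := by
    filter_upwards [au, R_comp hu hu0] with x hx hR
    rw [← hR] at hx
    have h2 := hx.comp hms.tendsto_atTop
    refine ph_tendsto ?_
    simpa only [Function.comp_def, Tl_comp _ _ ph_strictMono.monotone] using h2
  have av' : ∀ᵐ x : Circ, Tendsto (fun i => Tl (L (ns (ms i))) v x) atTop (𝓝 (R v x)) := by
    filter_upwards [av, R_comp hv hv0] with x hx hR
    rw [← hR] at hx
    refine ph_tendsto ?_
    simpa only [Function.comp_def, Tl_comp _ _ ph_strictMono.monotone] using hx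
  have hp : ∀ᵐ p : Circ × Circ ∂(volume.prod volume),
      ENNReal.ofReal (J (R u p.1 - R v p.2) * G (p.1 - p.2)) =
      liminf (fun i => ENNReal.ofReal (J (Tl (L (ns (ms i))) u p.1 - Tl (L (ns (ms i))) v p.2) *
        G (p.1 - p.2))) atTop := by
    have b1 := Measure.quasiMeasurePreserving_fst (μ := (volume : Measure Circ))
      (ν := (volume : Measure Circ)) |>.ae au'
    have b2 := Measure.quasiMeasurePreserving_snd (μ := (volume : Measure Circ))
      (ν := (volume : Measure Circ)) |>.ae av'
    filter_upwards [b1, b2] with p h1 h2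
    refine (Tendsto.liminf_eq ?_).symm
    refine (ENNReal.continuous_ofReal.tendsto _).comp ?_
    exact (((J_cont hJ).tendsto _).comp (h1.sub h2)).mul_const _
  unfold E
  rw [lintegral_congr_ae hp]
  refine (lintegral_liminf_le fun i => meas_E hJ hG (measurable_Tl _ hu) (measurable_Tl _ hv)).trans ?_
  refine liminf_le_of_le (by isBoundedDefault) ?_
  intro b hb
  obtain ⟨i, hi⟩ := hb.exists
  exact hi.trans (E_Tl_le hJ0 hJ hG _ hu hv)

/-- Equality in the rearrangement inequality forces the sign condition for every reflection. -/
lemma sign_of_eq {J : ℝ → ℝ} (hJ0 : ∀ t, 0 ≤ J t) (hJ : StrictConvexOn ℝ Set.univ J) {G : Circ → ℝ}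
    (hG : Ker G) {u v : Circ → ℝ} (hu : Measurable u) (hv : Measurable v)
    (hu0 : ∀ x, 0 ≤ u x) (hv0 : ∀ x, 0 ≤ v x) (hfin : E J G u v ≠ ⊤)
    (heq : E J G (R u) (R v) = E J G u v) (c : Circ) :
    ∀ᵐ p : Circ × Circ ∂((volume : Measure Circ).prod volume),
      0 ≤ ((u p.1 - u (rf c p.1)) * sn (p.1 - c)) * ((v p.2 - v (rf c p.2)) * sn (p.2 - c)) := by
  refine E_pol_eq hJ0 hJ hG c hu hv hfin ?_
  rw [← heq, ← R_congr (eqD_pol (c := c) hu), ← R_congr (eqD_pol (c := c) hv)]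
  exact E_R_le hJ0 hJ hG (measurable_pol hu) (measurable_pol hv) (pol_nonneg hu0) (pol_nonneg hv0)

end CircRearr


namespace CircRearr
open Filter Topology

lemma cover_aux {A B : Set Circ} {H K : AddSubgroup Circ}
    (hA1 : ∀ a ∈ A, ∀ b ∈ A, a - b ∈ H) (hA2 : ∀ a ∈ A, ∀ h ∈ H, a + h ∈ A)
    (hB1 : ∀ a ∈ B, ∀ b ∈ B, a - b ∈ K) (hB2 : ∀ a ∈ B, ∀ h ∈ K, a + h ∈ B)
    (hc : ∀ x, x ∈ A ∨ x ∈ B) : (∀ x, x ∈ H) ∨ (∀ x, x ∈ K) := by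
  by_cases h1 : ∀ x, x ∈ A
  · left; intro x
    have := hA1 x (h1 x) 0 (h1 0)
    simpa using this
  by_cases h2 : ∀ x, x ∈ B
  · right; intro x
    have := hB1 x (h2 x) 0 (h2 0)
    simpa using this
  push Not at h1 h2
  obtain ⟨x, hx⟩ := h1
  obtain ⟨y, hy⟩ := h2
  have hxB := (hc x).resolve_left hx
  have hyA := (hc y).resolve_right hy
  have HK : ∀ h ∈ H, h ∈ K := by
    intro h hh
    have : x + h ∉ A := fun h3 => hx (by simpa using hA2 _ h3 _ (H.neg_mem hh))
    have := hB1 _ ((hc _).resolve_left this) _ hxB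
    simpa using this
  have KH : ∀ h ∈ K, h ∈ H := by
    intro h hh
    have : y + h ∉ B := fun h3 => hy (by simpa using hB2 _ h3 _ (K.neg_mem hh))
    have := hA1 _ ((hc _).resolve_right this) _ hyA
    simpa using this
  left
  have hd : ∀ a b, (a ∈ A ∧ b ∈ A) ∨ (a ∈ B ∧ b ∈ B) → a - b ∈ H := by
    rintro a b (⟨h1, h2⟩ | ⟨h1, h2⟩)
    · exact hA1 _ h1 _ h2
    · exact KH _ (hB1 _ h1 _ h2)
  intro b
  obtain ⟨g, rfl⟩ := exists_half b
  have key : (g - 0 ∈ H) ∨ (0 - (-g) ∈ H) ∨ (g - (-g) ∈ H) := by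
    have i := hd g 0
    have j := hd 0 (-g)
    have k := hd g (-g)
    rcases hc g with a | a <;> rcases hc 0 with b | b <;> rcases hc (-g) with d | d <;> tauto
  rcases key with h | h | h
  · rw [sub_zero] at h; exact H.add_mem h h
  · rw [zero_sub, neg_neg] at h; exact H.add_mem h h
  · rwa [sub_neg_eq_add] at h

lemma ae_rf {p : Circ → Prop} (c : Circ) (h : ∀ᵐ x, p x) : ∀ᵐ x, p (rf c x) :=
  (rf_mp c).quasiMeasurePreserving.ae h

lemma ae_sub_left {p : Circ → Prop} (b : Circ) (h : ∀ᵐ x, p x) : ∀ᵐ x : Circ, p (b - x) := by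
  obtain ⟨c, rfl⟩ := exists_half b
  exact ae_rf c h

lemma ae_add {p : Circ → Prop} (b : Circ) (h : ∀ᵐ x, p x) : ∀ᵐ x : Circ, p (x + b) :=
  (eventually_add_right_iff volume b).mpr h

/-- group of a.e. periods -/
def per (u : Circ → ℝ) : AddSubgroup Circ where
  carrier := {h | ∀ᵐ x, u (x + h) = u x}
  zero_mem' := by
    change ∀ᵐ x : Circ, u (x + 0) = u x
    simp
  add_mem' := by
    intro a b ha hb
    change ∀ᵐ x : Circ, u (x + (a + b)) = u x
    filter_upwards [ha, ae_add a hb] with x h1 h2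
    rw [← add_assoc, h2, h1]
  neg_mem' := by
    intro a ha
    change ∀ᵐ x : Circ, u (x + -a) = u x
    filter_upwards [ae_add (-a) ha] with x h1
    rw [← h1]; simp

lemma const_of_per {u : Circ → ℝ} (hu : Measurable u) (h : ∀ b, b ∈ per u) :
    ∃ c, ∀ᵐ x, u x = c := by
  have hm : MeasurableSet {p : Circ × Circ | u (p.2 + p.1) = u p.2} := by
    have : Measurable fun p : Circ × Circ => p.2 + p.1 :=
      (continuous_snd.add continuous_fst).measurable
    exact measurableSet_eq_fun (hu.comp this) (hu.comp measurable_snd)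
  have h1 : ∀ᵐ b : Circ, ∀ᵐ x : Circ, u (x + b) = u x := .of_forall h
  have h2 := (Measure.ae_ae_comm (p := fun b x : Circ => u (x + b) = u x) hm).mp h1
  obtain ⟨x, hx⟩ := h2.exists
  exact ⟨u x, (eventually_add_left_iff volume x).mp hx⟩

lemma const_of_cover {u v : Circ → ℝ} (hu : Measurable u) (hv : Measurable v)
    (h : ∀ c, (∀ᵐ x, u (rf c x) = u x) ∨ (∀ᵐ x, v (rf c x) = v x)) :
    (∃ c, ∀ᵐ x, u x = c) ∨ (∃ c, ∀ᵐ x, v x = c) := by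
  let A : (Circ → ℝ) → Set Circ := fun w => {b | ∀ᵐ x, w (b - x) = w x}
  have hA1 : ∀ w, ∀ a ∈ A w, ∀ b ∈ A w, a - b ∈ per w := by
    intro w a ha b hb
    change ∀ᵐ x : Circ, w (x + (a - b)) = w x
    have ha' : ∀ᵐ x, w (a - x) = w x := ha
    have hb' : ∀ᵐ x, w (b - x) = w x := hb
    filter_upwards [ae_sub_left b ha', hb'] with x h1 h2
    rw [← h2, ← h1]; congr 1; abel
  have hA2 : ∀ w, ∀ a ∈ A w, ∀ b ∈ per w, a + b ∈ A w := by
    intro w a ha b hb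
    change ∀ᵐ x : Circ, w (a + b - x) = w x
    have ha' : ∀ᵐ x, w (a - x) = w x := ha
    have hb' : ∀ᵐ x, w (x + b) = w x := hb
    filter_upwards [ha', ae_sub_left a hb'] with x h1 h2
    rw [← h1, ← h2]; congr 1; abel
  have := cover_aux (hA1 u) (hA2 u) (hA1 v) (hA2 v) (by
    intro x
    obtain ⟨c, rfl⟩ := exists_half x
    exact h c)
  exact this.imp (const_of_per hu) (const_of_per hv)

lemma tricho {p q : Circ → ℝ}
    (h : ∀ᵐ z : Circ × Circ ∂((volume : Measure Circ).prod volume), 0 ≤ p z.1 * q z.2)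
    (hp : Measurable p) (hq : Measurable q) :
    ((∀ᵐ x, 0 ≤ p x) ∧ (∀ᵐ x, 0 ≤ q x)) ∨ ((∀ᵐ x, p x ≤ 0) ∧ (∀ᵐ x, q x ≤ 0)) ∨
    (∀ᵐ x, p x = 0) ∨ (∀ᵐ x, q x = 0) := by
  have h1 : ∀ᵐ x, ∀ᵐ y, 0 ≤ p x * q y := Measure.ae_ae_of_ae_prod h
  have hm : MeasurableSet {z : Circ × Circ | 0 ≤ p z.1 * q z.2} :=
    measurableSet_le measurable_const ((hp.comp measurable_fst).mul (hq.comp measurable_snd))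
  have h2 : ∀ᵐ y, ∀ᵐ x, 0 ≤ p x * q y :=
    (Measure.ae_ae_comm (p := fun x y : Circ => 0 ≤ p x * q y) hm).mp h1
  have a1 : (∀ᵐ x, p x ≤ 0) ∨ (∀ᵐ x, 0 ≤ q x) := by
    by_contra hc
    push Not at hc
    obtain ⟨x, hx, hx'⟩ := (hc.1.and_eventually h1).exists
    exact hc.2 (hx'.mono fun y hy => (nonneg_of_mul_nonneg_right hy hx).not_gt)
  have a2 : (∀ᵐ x, 0 ≤ p x) ∨ (∀ᵐ x, q x ≤ 0) := by
    by_contra hc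
    push Not at hc
    obtain ⟨x, hx, hx'⟩ := (hc.1.and_eventually h1).exists
    exact hc.2 (hx'.mono fun y hy h3 =>
      absurd hy (mul_neg_of_neg_of_pos hx h3).not_ge)
  rcases a1 with a1 | a1 <;> rcases a2 with a2 | a2
  · right; right; left
    filter_upwards [a1, a2] with x h h' using le_antisymm h h'
  · right; left; exact ⟨a1, a2⟩
  · left; exact ⟨a2, a1⟩
  · right; right; right
    filter_upwards [a1, a2] with x h h' using le_antisymm h' h

lemma sn_sub (x c : Circ) : sn (x - c) = sn x * cs c - cs x * sn c := by
  obtain ⟨x, rfl⟩ := exists_coe x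
  obtain ⟨c, rfl⟩ := exists_coe c
  rw [← AddCircle.coe_sub, sn_coe, sn_coe, sn_coe, cs_coe, cs_coe, Real.sin_sub]

noncomputable def pp (u : Circ → ℝ) (c x : Circ) : ℝ := (u x - u (rf c x)) * sn (x - c)

lemma measurable_sn_sub (c : Circ) : Measurable fun x => sn (x - c) :=
  (continuous_sn.comp (continuous_id.sub continuous_const)).measurable

lemma integrable_mul_sn {u : Circ → ℝ} (hu : Integrable u) (c : Circ) :
    Integrable fun x => u x * sn (x - c) :=
  hu.mul_bdd (c := 1) (measurable_sn_sub c).aestronglyMeasurable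
    (.of_forall fun x => by simpa using abs_sn_le _)

lemma measurable_pp {u : Circ → ℝ} (hu : Measurable u) (c : Circ) : Measurable (pp u c) :=
  (hu.sub (hu.comp (measurable_rf c))).mul (measurable_sn_sub c)

lemma integrable_pp {u : Circ → ℝ} (hu : Integrable u) (c : Circ) : Integrable (pp u c) :=
  integrable_mul_sn (hu.sub (Integrable.rf hu c)) c

lemma integral_pp {u : Circ → ℝ} (hu : Integrable u) (c : Circ) :
    ∫ x, pp u c x = 2 * ((∫ x, u x * sn x) * cs c - (∫ x, u x * cs x) * sn c) := by
  have e : ∀ x, pp u c x = u x * sn (x - c) + u (rf c x) * sn (rf c x - c) := by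
    intro x; rw [sn_rf]; unfold pp; ring
  have I := integrable_mul_sn hu c
  simp only [e]
  rw [← two_integral c I]
  congr 1
  have e2 : ∀ x, u x * sn (x - c) = (u x * sn x) * cs c - (u x * cs x) * sn c := by
    intro x; rw [sn_sub]; ring
  simp only [e2]
  have I1 : Integrable fun x => u x * sn x := by simpa using integrable_mul_sn hu 0
  have I2 : Integrable fun x => u x * cs x := integrable_mul_cs hu
  rw [integral_sub (I1.mul_const _) (I2.mul_const _), integral_mul_const, integral_mul_const]

lemma polar {X Y : ℝ} (h : ¬ (X = 0 ∧ Y = 0)) :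
    ∃ ρ : ℝ, 0 < ρ ∧ ∃ z : Circ, ∀ c : Circ, Y * cs c - X * sn c = ρ * sn (z - c) := by
  let w : ℂ := ⟨X, Y⟩
  have hw : w ≠ 0 := fun h0 => h ⟨congrArg Complex.re h0, congrArg Complex.im h0⟩
  refine ⟨‖w‖, norm_pos_iff.mpr hw, (w.arg : ℝ), fun c => ?_⟩
  have h1 : ‖w‖ * Real.cos w.arg = X := Complex.norm_mul_cos_arg w
  have h2 : ‖w‖ * Real.sin w.arg = Y := Complex.norm_mul_sin_arg w
  rw [sn_sub, sn_coe, cs_coe, ← h1, ← h2]; ring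

lemma eq_R_of_pp {u : Circ → ℝ} (hu : Measurable u) (hu0 : ∀ x, 0 ≤ u x) {z : Circ}
    (h : ∀ c, ∀ᵐ x, 0 ≤ pp u c x * sn (z - c)) : ∀ᵐ x, u (x + z) = R u x := by
  have hw : Measurable fun x => u (x + z) := hu.comp (measurable_add_const z)
  have hE : EqD (fun x => u (x + z)) u := by
    intro t
    have := (measurePreserving_add_right (volume : Measure Circ) z).measure_preimage
      (s := {y | t < u y}) (measurableSet_lt measurable_const hu).nullMeasurableSet
    exact this
  rw [← R_congr hE]
  refine eq_R_of_mono hw (fun x => hu0 _) (pairs_of_rf hw fun c => ?_)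
  filter_upwards [ae_add z (h (c + z))] with x hx
  have e1 : rf (c + z) (x + z) = rf c x + z := by simp only [rf]; abel
  have e2 : x + z - (c + z) = x - c := by abel
  have e3 : z - (c + z) = 0 - c := by abel
  unfold pp at hx
  rw [e1, e2, e3] at hx
  rw [cs_sub_rf]
  linarith

lemma equality_bdd {u v : Circ → ℝ} (hu : Measurable u) (hv : Measurable v)
    (hu0 : ∀ x, 0 ≤ u x) (hv0 : ∀ x, 0 ≤ v x) (huI : Integrable u) (hvI : Integrable v)
    (h : ∀ c, ∀ᵐ p : Circ × Circ ∂((volume : Measure Circ).prod volume),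
      0 ≤ pp u c p.1 * pp v c p.2) :
    (∃ c, ∀ᵐ x, u x = c) ∨ (∃ c, ∀ᵐ x, v x = c) ∨
      ∃ z, (∀ᵐ x, u (x + z) = R u x) ∧ (∀ᵐ x, v (x + z) = R v x) := by
  have T := fun c => tricho (h c) (measurable_pp hu c) (measurable_pp hv c)
  have refl_of : ∀ w : Circ → ℝ, ∀ c, (∀ᵐ x, pp w c x = 0) → ∀ᵐ x, w (rf c x) = w x := by
    intro w c hw
    filter_upwards [hw, ae_sn_ne c] with x h1 h2
    rcases mul_eq_zero.mp h1 with h3 | h3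
    · linarith
    · exact absurd h3 h2
  have zero_pos : ∀ w : Circ → ℝ, Integrable w → ∀ c, ∫ x, pp w c x = 0 → (∀ᵐ x, 0 ≤ pp w c x) →
      ∀ᵐ x, pp w c x = 0 := fun w hw c h0 h1 =>
    (integral_eq_zero_iff_of_nonneg_ae h1 (integrable_pp hw c)).mp h0
  have zero_neg : ∀ w : Circ → ℝ, Integrable w → ∀ c, ∫ x, pp w c x = 0 → (∀ᵐ x, pp w c x ≤ 0) →
      ∀ᵐ x, pp w c x = 0 := by
    intro w hw c h0 h1
    have := (integral_eq_zero_iff_of_nonneg_ae (f := fun x => - pp w c x)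
      (h1.mono fun x hx => by simpa using hx) (integrable_pp hw c).neg).mp
      (by rw [integral_neg, h0, neg_zero])
    filter_upwards [this] with x hx
    simpa using hx
  have zero_any : ∀ w : Circ → ℝ, Integrable w → (∫ x, w x * cs x) = 0 ∧ (∫ x, w x * sn x) = 0 →
      ∀ c, ∫ x, pp w c x = 0 := by
    intro w hw h0 c
    rw [integral_pp hw, h0.1, h0.2]; simp
  by_cases hU : (∫ x, u x * cs x) = 0 ∧ (∫ x, u x * sn x) = 0
  · have := const_of_cover hu hv fun c => by
      have h0 := zero_any u huI hU c
      rcases T c with ⟨a, b⟩ | ⟨a, b⟩ | a | a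
      · exact Or.inl (refl_of _ _ (zero_pos u huI c h0 a))
      · exact Or.inl (refl_of _ _ (zero_neg u huI c h0 a))
      · exact Or.inl (refl_of _ _ a)
      · exact Or.inr (refl_of _ _ a)
    exact this.imp_right Or.inl
  by_cases hV : (∫ x, v x * cs x) = 0 ∧ (∫ x, v x * sn x) = 0
  · have := const_of_cover hu hv fun c => by
      have h0 := zero_any v hvI hV c
      rcases T c with ⟨a, b⟩ | ⟨a, b⟩ | a | a
      · exact Or.inr (refl_of _ _ (zero_pos v hvI c h0 b))
      · exact Or.inr (refl_of _ _ (zero_neg v hvI c h0 b))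
      · exact Or.inl (refl_of _ _ a)
      · exact Or.inr (refl_of _ _ a)
    exact this.imp_right Or.inl
  right; right
  obtain ⟨ρ, hρ, z, hz⟩ := polar hU
  obtain ⟨τ, hτ, z', hz'⟩ := polar hV
  have Iu : ∀ c, ∫ x, pp u c x = 2 * (ρ * sn (z - c)) := fun c => by rw [integral_pp huI, hz]
  have Iv : ∀ c, ∫ x, pp v c x = 2 * (τ * sn (z' - c)) := fun c => by rw [integral_pp hvI, hz']
  have pos_of : ∀ {ρ s : ℝ}, 0 < ρ → 0 ≤ 2 * (ρ * s) → 0 ≤ s := by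
    intro ρ s h1 h2; by_contra h3; push Not at h3; nlinarith [mul_neg_of_pos_of_neg h1 h3]
  have neg_of : ∀ {ρ s : ℝ}, 0 < ρ → 2 * (ρ * s) ≤ 0 → s ≤ 0 := by
    intro ρ s h1 h2; by_contra h3; push Not at h3; nlinarith [mul_pos h1 h3]
  have zero_of : ∀ {ρ s : ℝ}, 0 < ρ → 2 * (ρ * s) = 0 → s = 0 := by
    intro ρ s h1 h2; exact le_antisymm (neg_of h1 h2.le) (pos_of h1 h2.ge)
  have sgn : ∀ c, ((∀ᵐ x, 0 ≤ pp u c x) ∧ (∀ᵐ x, 0 ≤ pp v c x) ∧ 0 ≤ sn (z - c) ∧ 0 ≤ sn (z' - c)) ∨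
      ((∀ᵐ x, pp u c x ≤ 0) ∧ (∀ᵐ x, pp v c x ≤ 0) ∧ sn (z - c) ≤ 0 ∧ sn (z' - c) ≤ 0) ∨
      ((∀ᵐ x, pp u c x = 0) ∧ sn (z - c) = 0) ∨ ((∀ᵐ x, pp v c x = 0) ∧ sn (z' - c) = 0) := by
    intro c
    rcases T c with ⟨a, b⟩ | ⟨a, b⟩ | a | a
    · refine Or.inl ⟨a, b, pos_of hρ ?_, pos_of hτ ?_⟩
      · rw [← Iu c]; exact integral_nonneg_of_ae a
      · rw [← Iv c]; exact integral_nonneg_of_ae b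
    · refine Or.inr (Or.inl ⟨a, b, neg_of hρ ?_, neg_of hτ ?_⟩)
      · rw [← Iu c]; exact integral_nonpos_of_ae a
      · rw [← Iv c]; exact integral_nonpos_of_ae b
    · refine Or.inr (Or.inr (Or.inl ⟨a, zero_of hρ ?_⟩))
      rw [← Iu c]; exact integral_eq_zero_of_ae a
    · refine Or.inr (Or.inr (Or.inr ⟨a, zero_of hτ ?_⟩))
      rw [← Iv c]; exact integral_eq_zero_of_ae a
  have hzz : z = z' := by
    obtain ⟨c, hc⟩ := exists_half (z + z')
    have h1 : 0 ≤ sn (z - c) * sn (z' - c) := by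
      rcases sgn c with ⟨_, _, a, b⟩ | ⟨_, _, a, b⟩ | ⟨_, a⟩ | ⟨_, a⟩
      · exact mul_nonneg a b
      · exact mul_nonneg_of_nonpos_of_nonpos a b
      · rw [a]; simp
      · rw [a]; simp
    have h2 := cs_sub_cs c z z'
    have h3 : z - rf c z' = 0 := by simp only [rf, hc]; abel
    rw [h3] at h2
    have h4 : cs 0 ≤ cs (z - z') := by linarith
    rw [cs_le_iff, norm_zero] at h4
    exact sub_eq_zero.mp (norm_le_zero_iff.mp h4)
  subst hzz
  refine ⟨z, eq_R_of_pp hu hu0 fun c => ?_, eq_R_of_pp hv hv0 fun c => ?_⟩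
  · rcases sgn c with ⟨a, _, b, _⟩ | ⟨a, _, b, _⟩ | ⟨_, a⟩ | ⟨_, a⟩
    · exact a.mono fun x hx => mul_nonneg hx b
    · exact a.mono fun x hx => mul_nonneg_of_nonpos_of_nonpos hx b
    · rw [a]; simp
    · rw [a]; simp
  · rcases sgn c with ⟨_, a, b, _⟩ | ⟨_, a, b, _⟩ | ⟨_, a⟩ | ⟨_, a⟩
    · exact a.mono fun x hx => mul_nonneg hx b
    · exact a.mono fun x hx => mul_nonneg_of_nonpos_of_nonpos hx b
    · rw [a]; simp
    · rw [a]; simp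

lemma ph_sgn (a b s : ℝ) : ∃ k : ℝ, 0 < k ∧ (ph a - ph b) * s = k * ((a - b) * s) := by
  rcases eq_or_ne a b with rfl | h
  · exact ⟨1, one_pos, by simp⟩
  · refine ⟨(ph a - ph b) / (a - b), ?_, ?_⟩
    · rcases lt_or_gt_of_ne h with h | h
      · exact div_pos_of_neg_of_neg (sub_neg.mpr (ph_strictMono h)) (sub_neg.mpr h)
      · exact div_pos (sub_pos.mpr (ph_strictMono h)) (sub_pos.mpr h)
    · have := sub_ne_zero.mpr h
      field_simp

lemma equality_gen {u v : Circ → ℝ} (hu : Measurable u) (hv : Measurable v)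
    (hu0 : ∀ x, 0 ≤ u x) (hv0 : ∀ x, 0 ≤ v x)
    (h : ∀ c, ∀ᵐ p : Circ × Circ ∂((volume : Measure Circ).prod volume),
      0 ≤ ((u p.1 - u (rf c p.1)) * sn (p.1 - c)) * ((v p.2 - v (rf c p.2)) * sn (p.2 - c))) :
    (∃ c, ∀ᵐ x, u x = c) ∨ (∃ c, ∀ᵐ x, v x = c) ∨
      ∃ z, (∀ᵐ x, u (x + z) = R u x) ∧ (∀ᵐ x, v (x + z) = R v x) := by
  have mu : Measurable fun x => ph (u x) := measurable_ph.comp hu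
  have mv : Measurable fun x => ph (v x) := measurable_ph.comp hv
  have u0 : ∀ x, 0 ≤ ph (u x) := fun x => ph_nonneg (hu0 x)
  have v0 : ∀ x, 0 ≤ ph (v x) := fun x => ph_nonneg (hv0 x)
  have hc : ∀ w : Circ → ℝ, (∃ c, ∀ᵐ x, ph (w x) = c) → ∃ c, ∀ᵐ x, w x = c := by
    rintro w ⟨c, hc⟩
    obtain ⟨x, hx⟩ := hc.exists
    exact ⟨w x, hc.mono fun y hy => ph_strictMono.injective (hy.trans hx.symm)⟩
  have hz : ∀ w : Circ → ℝ, Measurable w → (∀ x, 0 ≤ w x) → ∀ z : Circ,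
      (∀ᵐ x, ph (w (x + z)) = R (fun x => ph (w x)) x) → ∀ᵐ x, w (x + z) = R w x := by
    intro w mw w0 z h1
    filter_upwards [h1, R_comp mw w0] with x h2 h3
    exact ph_strictMono.injective (h2.trans h3.symm)
  rcases equality_bdd mu mv u0 v0 (integrable_bdd' mu u0 fun x => ph_le _)
    (integrable_bdd' mv v0 fun x => ph_le _) (fun c => by
      filter_upwards [h c] with p hp
      obtain ⟨k, hk, e1⟩ := ph_sgn (u p.1) (u (rf c p.1)) (sn (p.1 - c))
      obtain ⟨m, hm, e2⟩ := ph_sgn (v p.2) (v (rf c p.2)) (sn (p.2 - c))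
      unfold pp
      rw [e1, e2, mul_mul_mul_comm]
      exact mul_nonneg (mul_pos hk hm).le hp) with a | a | ⟨z, a, b⟩
  · exact Or.inl (hc _ a)
  · exact Or.inr (Or.inl (hc _ a))
  · exact Or.inr (Or.inr ⟨z, hz _ hu hu0 z a, hz _ hv hv0 z b⟩)

end CircRearr


namespace CircRearr
open Filter Topology

lemma E_congr {J : ℝ → ℝ} {G : Circ → ℝ} {u v u' v' : Circ → ℝ} (hu : ∀ᵐ x, u x = u' x)
    (hv : ∀ᵐ x, v x = v' x) : E J G u v = E J G u' v' := by
  have b1 := Measure.quasiMeasurePreserving_fst (μ := (volume : Measure Circ))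
    (ν := (volume : Measure Circ)) |>.ae hu
  have b2 := Measure.quasiMeasurePreserving_snd (μ := (volume : Measure Circ))
    (ν := (volume : Measure Circ)) |>.ae hv
  unfold E
  refine lintegral_congr_ae ?_
  filter_upwards [b1, b2] with p h1 h2
  rw [h1, h2]

lemma E_const_left {J : ℝ → ℝ} (hJ0 : ∀ t, 0 ≤ J t) (hJ : StrictConvexOn ℝ Set.univ J) {G : Circ → ℝ}
    (hG : Ker G) {v : Circ → ℝ} (hv : Measurable v) (c : ℝ) :
    E J G (fun _ => c) v = ∫⁻ y, ENNReal.ofReal (J (c - v y)) * ∫⁻ x, ENNReal.ofReal (G x) := by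
  unfold E
  rw [lintegral_prod_symm' _ (meas_E hJ hG measurable_const hv)]
  refine lintegral_congr fun y => ?_
  simp only [ENNReal.ofReal_mul (hJ0 _)]
  have m : Measurable fun x => ENNReal.ofReal (G (x - y)) :=
    (hG.meas.comp (measurable_sub_const y)).ennreal_ofReal
  rw [lintegral_const_mul _ m]
  rw [lintegral_sub_right_eq_self (fun x => ENNReal.ofReal (G x)) y]

lemma E_const_right {J : ℝ → ℝ} (hJ0 : ∀ t, 0 ≤ J t) (hJ : StrictConvexOn ℝ Set.univ J) {G : Circ → ℝ}
    (hG : Ker G) {u : Circ → ℝ} (hu : Measurable u) (c : ℝ) :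
    E J G u (fun _ => c) = ∫⁻ x, ENNReal.ofReal (J (u x - c)) * ∫⁻ x, ENNReal.ofReal (G x) := by
  unfold E
  rw [lintegral_prod _ (meas_E hJ hG hu measurable_const).aemeasurable]
  refine lintegral_congr fun x => ?_
  simp only [ENNReal.ofReal_mul (hJ0 _)]
  have m : Measurable fun y => ENNReal.ofReal (G (x - y)) :=
    (hG.meas.comp (measurable_const_sub x)).ennreal_ofReal
  rw [lintegral_const_mul _ m]
  rw [lintegral_sub_left_eq_self (fun x => ENNReal.ofReal (G x)) x]

lemma R_const {u : Circ → ℝ} (hu : Measurable u) (hu0 : ∀ x, 0 ≤ u x) {c : ℝ}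
    (h : ∀ᵐ x, u x = c) : ∀ᵐ x, R u x = c := by
  have e := (eqD_R hu hu0).map_eq (measurable_R hu) hu
  have m : MeasurableSet {s : ℝ | s = c} := measurableSet_singleton c
  have h1 : ∀ᵐ s ∂(Measure.map u volume), s = c := (ae_map_iff hu.aemeasurable m).mpr h
  rw [← e] at h1
  exact (ae_map_iff (measurable_R hu).aemeasurable m).mp h1

theorem circle_main {J : ℝ → ℝ} (hJ0 : ∀ t, 0 ≤ J t) (hJ : StrictConvexOn ℝ Set.univ J) {G : Circ → ℝ}
    (hG : Ker G) {u v : Circ → ℝ} (hu : Measurable u) (hv : Measurable v)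
    (hu0 : ∀ x, 0 ≤ u x) (hv0 : ∀ x, 0 ≤ v x) (hfin : E J G u v ≠ ⊤) :
    E J G (R u) (R v) = E J G u v ↔
    (∃ c, ∀ᵐ x, u x = c) ∨ (∃ c, ∀ᵐ x, v x = c) ∨
      ∃ z, (∀ᵐ x, u (x + z) = R u x) ∧ (∀ᵐ x, v (x + z) = R v x) := by
  have mJ := (J_cont hJ).measurable
  constructor
  · intro h
    exact equality_gen hu hv hu0 hv0 (sign_of_eq hJ0 hJ hG hu hv hu0 hv0 hfin h)
  · rintro (⟨c, hc⟩ | ⟨c, hc⟩ | ⟨z, h1, h2⟩)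
    · rw [E_congr (v' := R v) (R_const hu hu0 hc) (.of_forall fun _ => rfl),
        E_congr (v' := v) hc (.of_forall fun _ => rfl), E_const_left hJ0 hJ hG hv,
        E_const_left hJ0 hJ hG (measurable_R hv)]
      exact (eqD_R hv hv0).lintegral_eq (measurable_R hv) hv
        (ψ := fun s => ENNReal.ofReal (J (c - s)) * ∫⁻ x, ENNReal.ofReal (G x)) (by fun_prop)
    · rw [E_congr (u' := R u) (.of_forall fun _ => rfl) (R_const hv hv0 hc),
        E_congr (u' := u) (.of_forall fun _ => rfl) hc, E_const_right hJ0 hJ hG hu,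
        E_const_right hJ0 hJ hG (measurable_R hu)]
      exact (eqD_R hu hu0).lintegral_eq (measurable_R hu) hu
        (ψ := fun s => ENNReal.ofReal (J (s - c)) * ∫⁻ x, ENNReal.ofReal (G x)) (by fun_prop)
    · rw [← E_congr h1 h2]
      have mp : MeasurePreserving (Prod.map (fun x : Circ => x + z) (fun x : Circ => x + z))
          ((volume : Measure Circ).prod (volume : Measure Circ)) (volume.prod volume) :=
        (measurePreserving_add_right volume z).prod (measurePreserving_add_right volume z)
      have := mp.lintegral_comp (meas_E hJ hG hu hv)
      simp only [Prod.map_fst, Prod.map_snd, add_sub_add_right_eq_sub] at this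
      exact this

end CircRearr


namespace CircRearr
open Filter Topology

/-- transfer of a function on `[-π,π)` to the circle -/
noncomputable def up (u : ℝ → ℝ) (b : Circ) : ℝ := u (AddCircle.equivIco (2 * π) (-π) b : ℝ)

lemma measurable_up {u : ℝ → ℝ} (hu : Measurable u) : Measurable (up u) :=
  hu.comp (measurable_subtype_coe.comp (AddCircle.measurableEquivIco (2 * π) (-π)).measurable)

lemma equiv_coe (x : ℝ) : ((AddCircle.equivIco (2 * π) (-π) (x : Circ)) : ℝ) =
    x - 2 * π * (⌊(x + π) / (2 * π)⌋ : ℝ) := by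
  have h : ((AddCircle.equivIco (2 * π) (-π) (x : Circ)) : ℝ) = toIcoMod two_pi_pos (-π) x := rfl
  rw [h, toIcoMod, toIcoDiv_eq_floor, sub_neg_eq_add, zsmul_eq_mul, mul_comm]

lemma up_coe (u : ℝ → ℝ) (x : ℝ) : up u (x : Circ) = periodize u x := by
  unfold up periodize; rw [equiv_coe]

lemma periodize_of_mem (u : ℝ → ℝ) {x : ℝ} (h : x ∈ Set.Ioo (-π) π) : periodize u x = u x := by
  have : ⌊(x + π) / (2 * π)⌋ = 0 := by
    rw [Int.floor_eq_zero_iff]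
    have := two_pi_pos
    constructor
    · exact div_nonneg (by linarith [h.1]) this.le
    · rw [div_lt_one this]; linarith [h.2]
  unfold periodize; rw [this]; simp

lemma up_of_mem (u : ℝ → ℝ) {x : ℝ} (h : x ∈ Set.Ioo (-π) π) : up u (x : Circ) = u x := by
  rw [up_coe, periodize_of_mem u h]

lemma neg_pi_add : -π + 2 * π = π := by ring

lemma lint_up (F : Circ → ENNReal) : ∫⁻ x in Set.Ioo (-π) π, F (x : Circ) = ∫⁻ b, F b := by
  have := AddCircle.lintegral_preimage (2 * π) (-π) F
  rw [neg_pi_add] at this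
  rw [← this]
  exact setLIntegral_congr Ioo_ae_eq_Ioc

lemma ae_up {p : Circ → Prop} (hp : MeasurableSet {b | p b}) :
    (∀ᵐ x ∂(volume.restrict (Set.Ioo (-π) π)), p ((x : ℝ) : Circ)) ↔ ∀ᵐ b : Circ, p b := by
  have m := AddCircle.measurePreserving_mk (2 * π) (-π)
  rw [neg_pi_add] at m
  rw [Measure.restrict_congr_set Ioo_ae_eq_Ioc, ← m.map_eq, ae_map_iff m.measurable.aemeasurable hp]

lemma ae_real {p : Circ → Prop} (hp : MeasurableSet {b | p b}) :
    (∀ᵐ x : ℝ, p (x : Circ)) ↔ ∀ᵐ b : Circ, p b := by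
  constructor
  · intro h; exact (ae_up hp).mp (ae_restrict_of_ae h)
  · intro h
    have h1 : ∀ n : ℤ, ∀ᵐ x ∂(volume.restrict (Set.Ioc (-π + n • (2 * π)) (-π + (n + 1) • (2 * π)))),
        p ((x : ℝ) : Circ) := by
      intro n
      have m := AddCircle.measurePreserving_mk (2 * π) (-π + n • (2 * π))
      rw [add_assoc, ← add_one_zsmul] at m
      exact m.quasiMeasurePreserving.ae h
    have h2 := (ae_restrict_iUnion_iff _ _).mpr h1
    rw [iUnion_Ioc_add_zsmul two_pi_pos, Measure.restrict_univ] at h2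
    exact h2

lemma dist_up {u : ℝ → ℝ} (hu : Measurable u) (t : ℝ) :
    (volume {y | y ∈ Set.Ioo (-π) π ∧ t < u y}).toReal = dist' (up u) t := by
  unfold dist'
  congr 1
  have m := AddCircle.measurePreserving_mk (2 * π) (-π)
  rw [neg_pi_add] at m
  have hs : MeasurableSet {b : Circ | t < up u b} := measurableSet_lt measurable_const (measurable_up hu)
  rw [← m.measure_preimage hs.nullMeasurableSet, ← Measure.restrict_congr_set Ioo_ae_eq_Ioc,
    Measure.restrict_apply (m.measurable hs)]
  congr 1
  ext y
  constructor
  · rintro ⟨h1, h2⟩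
    refine ⟨?_, h1⟩
    change t < up u (y : Circ)
    rwa [up_of_mem u h1]
  · rintro ⟨h1, h2⟩
    refine ⟨h2, ?_⟩
    change t < up u (y : Circ) at h1
    rwa [up_of_mem u h2] at h1

lemma norm_coe {x : ℝ} (h : |x| ≤ π) : ‖(x : Circ)‖ = |x| := by
  refine (AddCircle.norm_coe_eq_abs_iff (2 * π) two_pi_pos.ne').mpr ?_
  rw [abs_of_pos two_pi_pos]; linarith

lemma symmRearr_eq {u : ℝ → ℝ} (hu : Measurable u) {x : ℝ} (h : |x| ≤ π) :
    symmRearr u x = R (up u) (x : Circ) := by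
  unfold symmRearr R
  have hm : MeasurableSet {t : ℝ | 2 * ‖(x : Circ)‖ < dist' (up u) t} :=
    measurableSet_lt measurable_const (dist'_anti _).measurable
  have e : ∀ t : ℝ, (symmSet {y | y ∈ Set.Ioo (-π) π ∧ t < u y}).indicator (fun _ => (1 : ℝ)) x =
      ({t : ℝ | 2 * ‖(x : Circ)‖ < dist' (up u) t}).indicator 1 t := by
    intro t
    unfold symmSet
    rw [dist_up hu]
    have : x ∈ Set.Ioo (-(dist' (up u) t / 2)) (dist' (up u) t / 2) ↔
        t ∈ {t : ℝ | 2 * ‖(x : Circ)‖ < dist' (up u) t} := by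
      rw [Set.mem_Ioo, ← abs_lt, Set.mem_ofPred_eq, norm_coe h]
      constructor <;> intro h <;> linarith
    by_cases hx : x ∈ Set.Ioo (-(dist' (up u) t / 2)) (dist' (up u) t / 2)
    · rw [Set.indicator_of_mem hx, Set.indicator_of_mem (this.mp hx)]; rfl
    · rw [Set.indicator_of_notMem hx, Set.indicator_of_notMem (fun h => hx (this.mpr h))]
  simp only [e]
  rw [integral_indicator_one hm, Measure.real, Measure.restrict_apply hm]
  congr 2
  ext t
  exact and_comm

lemma perRearr_eq {u : ℝ → ℝ} (hu : Measurable u) (x : ℝ) :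
    perRearr u x = R (up u) (x : Circ) := by
  unfold perRearr
  rw [← up_coe]
  change symmRearr u (AddCircle.equivIco (2 * π) (-π) (x : Circ) : ℝ) = R (up u) (x : Circ)
  have h1 := (AddCircle.equivIco (2 * π) (-π) (x : Circ)).2
  have h2 : ((AddCircle.equivIco (2 * π) (-π) (x : Circ) : _) : ℝ) < π := by
    have := h1.2
    linarith
  rw [symmRearr_eq hu (abs_le.mpr ⟨h1.1, h2.le⟩), AddCircle.coe_equivIco]

lemma ker_up {g : ℝ → ℝ} (hgmeas : Measurable g) (hgnonneg : ∀ x, 0 ≤ g x)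
    (hgper : ∀ x, g (x + 2 * π) = g x)
    (hgsymm : ∀ x, g x = perRearr g x) (hgdec : StrictAntiOn g (Set.Ioo 0 π)) :
    Ker (up g) ∧ ∀ x : ℝ, up g (x : Circ) = g x := by
  have hco : ∀ x : ℝ, up g (x : Circ) = g x := by
    intro x
    rw [up_coe]; unfold periodize
    have := (show Function.Periodic g (2 * π) from hgper).sub_int_mul_eq (x := x)
      ⌊(x + π) / (2 * π)⌋
    rw [mul_comm]; exact this
  have hR : ∀ b, up g b = R (up g) b := by
    intro b
    obtain ⟨x, rfl⟩ := exists_coe b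
    rw [hco, hgsymm, perRearr_eq hgmeas]
  have hn : ∀ b : Circ, up g b = g ‖b‖ := by
    intro b
    have e : ‖((‖b‖ : ℝ) : Circ)‖ = ‖b‖ := by
      rw [norm_coe (by rw [abs_norm]; exact norm_le_pi b), abs_norm]
    rw [← hco ‖b‖, hR b, hR]
    unfold R; rw [e]
  have hpi : g π = 0 := by
    rw [← hco, hR]
    unfold R
    have e : ‖((π : ℝ) : Circ)‖ = π := by
      rw [norm_coe (by rw [abs_of_pos pi_pos]), abs_of_pos pi_pos]
    have : {t : ℝ | 0 < t ∧ 2 * ‖((π : ℝ) : Circ)‖ < dist' (up g) t} = ∅ := by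
      ext t
      simp only [Set.mem_ofPred_eq, Set.mem_empty_iff_false, iff_false, e]
      rintro ⟨_, h⟩
      exact absurd (dist'_le (up g) t) (not_le.mpr h)
    rw [this]; simp
  refine ⟨⟨measurable_up hgmeas, fun x => hgnonneg _, fun x => by rw [hn, hn, norm_neg], ?_⟩, hco⟩
  intro x y hx hxy
  rw [cs_lt_iff] at hxy
  rw [hn, hn]
  have hx0 := norm_pos_iff.mpr hx
  have hy := norm_le_pi y
  rcases hy.eq_or_lt with h | h
  · rw [h, hpi]
    have h3 : ‖x‖ < π := hxy.trans_eq h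
    have := hgdec (a := ‖x‖) (b := (‖x‖ + π) / 2) ⟨hx0, h3⟩ ⟨by linarith, by linarith⟩ (by linarith)
    exact lt_of_le_of_lt (hgnonneg _) this
  · exact hgdec ⟨hx0, hxy.trans h⟩ ⟨hx0.trans hxy, h⟩ hxy

lemma E_eq {J : ℝ → ℝ} (hJ : StrictConvexOn ℝ Set.univ J) {g : ℝ → ℝ} (hG : Ker (up g))
    (hco : ∀ x : ℝ, up g (x : Circ) = g x) {u v : ℝ → ℝ} {a b : Circ → ℝ}
    (ha : Measurable a) (hb : Measurable b)
    (hu : ∀ x ∈ Set.Ioo (-π) π, u x = a (x : Circ)) (hv : ∀ x ∈ Set.Ioo (-π) π, v x = b (x : Circ)) :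
    (∫⁻ x in Set.Ioo (-π) π, ∫⁻ y in Set.Ioo (-π) π,
        ENNReal.ofReal (J (u x - v y) * g (x - y))) = E J (up g) a b := by
  unfold E
  rw [lintegral_prod _ (meas_E hJ hG ha hb).aemeasurable, ← lint_up]
  refine setLIntegral_congr_fun measurableSet_Ioo fun x hx => ?_
  dsimp only
  rw [← lint_up]
  refine setLIntegral_congr_fun measurableSet_Ioo fun y hy => ?_
  rw [hu x hx, hv y hy, ← hco (x - y), AddCircle.coe_sub]

end CircRearr
open CircRearr
theorem stmt_4
    (J : ℝ → ℝ) (hJnonneg : ∀ t, 0 ≤ J t) (hJconv : StrictConvexOn ℝ Set.univ J)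
    (g : ℝ → ℝ) (hgmeas : Measurable g) (hgnonneg : ∀ x, 0 ≤ g x)
    (hgper : ∀ x, g (x + 2 * π) = g x) (hgint : IntegrableOn g (Set.Ioo (-π) π))
    (hgsymm : ∀ x, g x = perRearr g x) (hgdec : StrictAntiOn g (Set.Ioo 0 π))
    (u v : ℝ → ℝ) (humeas : Measurable u) (hvmeas : Measurable v)
    (hu0 : ∀ x, 0 ≤ u x) (hv0 : ∀ x, 0 ≤ v x)
    (hfin : (∫⁻ x in Set.Ioo (-π) π, ∫⁻ y in Set.Ioo (-π) π,
        ENNReal.ofReal (J (u x - v y) * g (x - y))) ≠ ⊤) :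
    ((∫⁻ x in Set.Ioo (-π) π, ∫⁻ y in Set.Ioo (-π) π,
        ENNReal.ofReal (J (symmRearr u x - symmRearr v y) * g (x - y))) =
      ∫⁻ x in Set.Ioo (-π) π, ∫⁻ y in Set.Ioo (-π) π,
        ENNReal.ofReal (J (u x - v y) * g (x - y))) ↔
      ((∃ c : ℝ, ∀ᵐ x ∂(volume.restrict (Set.Ioo (-π) π)), u x = c) ∨
        (∃ c : ℝ, ∀ᵐ y ∂(volume.restrict (Set.Ioo (-π) π)), v y = c) ∨
        ∃ z : ℝ,
          (∀ᵐ x ∂(volume : Measure ℝ), periodize u x = perRearr u (x + z)) ∧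
          (∀ᵐ y ∂(volume : Measure ℝ), periodize v y = perRearr v (y + z))) := by
  obtain ⟨hG, hco⟩ := ker_up hgmeas hgnonneg hgper hgsymm hgdec
  have mu := measurable_up humeas
  have mv := measurable_up hvmeas
  have e1 := E_eq hJconv hG hco (u := u) (v := v) mu mv (fun x hx => (up_of_mem u hx).symm)
    (fun x hx => (up_of_mem v hx).symm)
  have e2 := E_eq hJconv hG hco (u := symmRearr u) (v := symmRearr v) (measurable_R mu)
    (measurable_R mv)
    (fun x hx => symmRearr_eq humeas (abs_le.mpr ⟨hx.1.le, hx.2.le⟩))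
    (fun x hx => symmRearr_eq hvmeas (abs_le.mpr ⟨hx.1.le, hx.2.le⟩))
  rw [e1] at hfin
  rw [e1, e2, circle_main hJnonneg hJconv hG mu mv (fun x => hu0 _) (fun x => hv0 _) hfin]
  have hc : ∀ w : ℝ → ℝ, Measurable w → ∀ c : ℝ, ((∀ᵐ b : Circ, up w b = c) ↔
      ∀ᵐ x ∂(volume.restrict (Set.Ioo (-π) π)), w x = c) := by
    intro w mw c
    rw [← ae_up (measurableSet_eq_fun (measurable_up mw) measurable_const)]
    refine Filter.eventually_congr ?_
    filter_upwards [ae_restrict_mem measurableSet_Ioo] with x hx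
    rw [up_of_mem w hx]
  have hz : ∀ w : ℝ → ℝ, Measurable w → ∀ z : ℝ,
      ((∀ᵐ b : Circ, up w (b + ((-z : ℝ) : Circ)) = R (up w) b) ↔
      ∀ᵐ x : ℝ, periodize w x = perRearr w (x + z)) := by
    intro w mw z
    have hm : MeasurableSet {b : Circ | up w b = R (up w) (b + (z : Circ))} :=
      measurableSet_eq_fun (measurable_up mw)
        ((measurable_R (measurable_up mw)).comp (measurable_add_const _))
    have h1 : (∀ᵐ b : Circ, up w (b + ((-z : ℝ) : Circ)) = R (up w) b) ↔
        ∀ᵐ b : Circ, up w b = R (up w) (b + (z : Circ)) := by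
      rw [← eventually_add_right_iff (volume : Measure Circ) (z : Circ)]
      refine Filter.eventually_congr (.of_forall fun b => ?_)
      rw [AddCircle.coe_neg, add_neg_cancel_right]
    rw [h1, ← ae_real hm]
    refine Filter.eventually_congr (.of_forall fun x => ?_)
    rw [up_coe, perRearr_eq mw, AddCircle.coe_add]
  refine or_congr (exists_congr fun c => hc u humeas c)
    (or_congr (exists_congr fun c => hc v hvmeas c) ?_)
  constructor
  · rintro ⟨z, h1, h2⟩
    obtain ⟨r, hr⟩ := exists_coe (-z)
    have : z = ((-r : ℝ) : Circ) := by rw [AddCircle.coe_neg, hr, neg_neg]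
    rw [this] at h1 h2
    exact ⟨r, (hz u humeas r).mp h1, (hz v hvmeas r).mp h2⟩
  · rintro ⟨r, h1, h2⟩
    exact ⟨_, (hz u humeas r).mpr h1, (hz v hvmeas r).mpr h2⟩
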